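/- For each ε > 0 there exists a constant c(ε) such that the following holds. Let P be a set of m distinct points and L a set of n distinct lines in ℝ³, and assume that every algebraic surface in ℝ³ of degree at most c(ε) contains at most q₂ lines of L. Then I(P,L) ≤ α·(m^{1/2+ε}·n^{3/4} + m^{2/3+ε}·n^{1/2}·q₂^{1/6} + m + n), where α is a constant depending only on ε. -/

import Mathlib

attribute [local instance] Classical.propDecidable

noncomputable section

/-- The number of incidences between a finite set of points and a finite set of
curves (subsets of `ℝ^d`): the number of pairs `(p, γ)` with `p ∈ γ`. -/
def Incidences {d : ℕ} (P : Finset (Fin d → ℝ)) (C : Finset (Set (Fin d → ℝ))) : ℕ :=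
  ((P ×ˢ C).filter fun pc => pc.1 ∈ pc.2).card

/-- A line in `ℝ^d`. -/
def IsLine {d : ℕ} (ℓ : Set (Fin d → ℝ)) : Prop :=
  ∃ a b : Fin d → ℝ, b ≠ 0 ∧ ℓ = {x | ∃ t : ℝ, x = a + t • b}

/-- The real zero set of a polynomial in `d` variables. -/
def zeroSet {d : ℕ} (f : MvPolynomial (Fin d) ℝ) : Set (Fin d → ℝ) :=
  {x | MvPolynomial.eval x f = 0}

/-- A real algebraic set in `ℝ^d`. -/
def IsAlgSet {d : ℕ} (V : Set (Fin d → ℝ)) : Prop :=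
  ∃ S : Set (MvPolynomial (Fin d) ℝ),
    V = {x | ∀ f ∈ S, MvPolynomial.eval x f = 0}

/-- A real algebraic set in `ℝ^d` cut out by polynomials of degree at most `E`. -/
def IsAlgSetDeg {d : ℕ} (E : ℕ) (V : Set (Fin d → ℝ)) : Prop :=
  ∃ S : Set (MvPolynomial (Fin d) ℝ), (∀ f ∈ S, f.totalDegree ≤ E) ∧
    V = {x | ∀ f ∈ S, MvPolynomial.eval x f = 0}

/-- An irreducible real algebraic set: a nonempty algebraic set that is not the
union of two proper algebraic subsets. -/
def IsIrredAlgSet {d : ℕ} (V : Set (Fin d → ℝ)) : Prop :=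
  IsAlgSet V ∧ V.Nonempty ∧
    ∀ V₁ V₂ : Set (Fin d → ℝ), IsAlgSet V₁ → IsAlgSet V₂ → V = V₁ ∪ V₂ →
      V = V₁ ∨ V = V₂

/-- The real algebraic set `V` has dimension at least `j`: there is a strictly
increasing chain of `j+1` irreducible algebraic sets contained in `V`. -/
def AlgDimGE {d : ℕ} (j : ℕ) (V : Set (Fin d → ℝ)) : Prop :=
  ∃ W : Fin (j + 1) → Set (Fin d → ℝ),
    (∀ i, IsIrredAlgSet (W i)) ∧
    (∀ i i' : Fin (j + 1), i < i' → W i ⊂ W i') ∧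
    W (Fin.last j) ⊆ V

/-- The real algebraic set `V` has dimension exactly `j`. -/
def HasAlgDim {d : ℕ} (j : ℕ) (V : Set (Fin d → ℝ)) : Prop :=
  AlgDimGE j V ∧ ¬ AlgDimGE (j + 1) V

/-- An irreducible algebraic curve of degree at most `E` in `ℝ^d`: an irreducible
real algebraic set of dimension one, cut out by polynomials of degree at most `E`. -/
def IsIrredCurve {d : ℕ} (E : ℕ) (γ : Set (Fin d → ℝ)) : Prop :=
  IsAlgSetDeg E γ ∧ IsIrredAlgSet γ ∧ HasAlgDim 1 γ

/-- A finite family `C` of curves has `k` degrees of freedom with multiplicity `s`: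
(i) for every `k` distinct points, at most `s` curves of `C` pass through all of
them, and (ii) any two distinct curves of `C` intersect in at most `s` points. -/
def HasDegreesOfFreedom {d : ℕ} (C : Finset (Set (Fin d → ℝ))) (k s : ℕ) : Prop :=
  (∀ pts : Finset (Fin d → ℝ), pts.card = k →
      (C.filter fun γ => ∀ p ∈ pts, p ∈ γ).card ≤ s) ∧
  ∀ γ₁ ∈ C, ∀ γ₂ ∈ C, γ₁ ≠ γ₂ → (γ₁ ∩ γ₂).Finite ∧ (γ₁ ∩ γ₂).ncard ≤ s

section Split
variable {ι X : Type} [Fintype ι] [DecidableEq ι]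

/-- The square matrix with row `none` equal to `u` and row `some i` equal to `v i (p i)`. -/
def dmat (v : ι → X → Option ι → ℝ) (p : ι → X) (u : Option ι → ℝ) :
    Matrix (Option ι) (Option ι) ℝ :=
  fun a => a.elim u (fun i => v i (p i))

lemma dt_swap (v : ι → X → Option ι → ℝ) (p : ι → X) (i : ι) (x y : X) :
    (dmat v (Function.update p i x) (v i y)).det
      = - (dmat v (Function.update p i y) (v i x)).det := by
  have h : dmat v (Function.update p i x) (v i y)
      = (dmat v (Function.update p i y) (v i x)).submatrix (Equiv.swap none (some i)) id := by
    ext a b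
    rcases a with _ | j
    · simp [dmat]
    · by_cases hj : j = i
      · subst hj; simp [dmat]
      · rw [Matrix.submatrix_apply, Equiv.swap_apply_of_ne_of_ne (by simp) (by simpa using hj)]
        simp [dmat, hj]
  rw [h, Matrix.det_permute, Equiv.Perm.sign_swap (by simp)]
  simp

lemma dt_lin (v : ι → X → Option ι → ℝ) (p : ι → X) (u : Option ι → ℝ) :
    (dmat v p u).det = ∑ b, (dmat v p (Pi.single b 1)).det * u b := by
  have key : ∀ u, (dmat v p u).det
      = ((LinearMap.proj none : (Option ι → ℝ) →ₗ[ℝ] ℝ) ∘ₗ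
          (Matrix.cramer (dmat v p 0).transpose)) u := by
    intro u
    have : dmat v p u = (dmat v p 0).updateRow none u := by
      ext a b
      rcases a with _ | j <;> simp [dmat, Matrix.updateRow_apply]
    rw [this]
    simp [Matrix.cramer_transpose_apply]
  rw [key, LinearMap.pi_apply_eq_sum_univ]
  refine Finset.sum_congr rfl fun b _ => ?_
  rw [key, smul_eq_mul, mul_comm]
  congr 2
  ext j
  simp [Pi.single_apply, eq_comm]

lemma split_three (v : ι → X → Option ι → ℝ) (p : ι → X) (i : ι) (z x y : X)
    (h1 : 0 < (dmat v (Function.update p i z) (v i x)).det *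
      (dmat v (Function.update p i z) (v i y)).det)
    (h2 : 0 < (dmat v (Function.update p i x) (v i z)).det *
      (dmat v (Function.update p i x) (v i y)).det)
    (h3 : 0 < (dmat v (Function.update p i y) (v i x)).det *
      (dmat v (Function.update p i y) (v i z)).det) : False := by
  rw [dt_swap v p i x z] at h2
  rw [dt_swap v p i y z, dt_swap v p i y x] at h3
  set a := (dmat v (Function.update p i z) (v i x)).det
  set b := (dmat v (Function.update p i z) (v i y)).det
  set c := (dmat v (Function.update p i x) (v i y)).det
  have := mul_pos (mul_pos h1 h2) h3
  nlinarith [sq_nonneg (a*b*c)]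

lemma split_generic (v : ι → X → Option ι → ℝ) (S : ι → Finset X)
    (hS : ∀ i, (S i).Nonempty)
    (hgen : ∀ p ∈ Fintype.piFinset S, ∃ u, (dmat v p u).det ≠ 0) :
    ∃ c : Option ι → ℝ, c ≠ 0 ∧
      3 * ∑ i, (((S i) ×ˢ (S i)).filter fun z =>
        0 < (∑ b, c b * v i z.1 b) * (∑ b, c b * v i z.2 b)).card ≤ 2 * ∑ i, (S i).card ^ 2 := by
  set N := Fintype.piFinset S with hN
  have hNne : N.Nonempty := Fintype.piFinset_nonempty.2 hS
  -- indicator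
  let h : ι → (ι → X) → X × X → ℕ := fun i p z =>
    if 0 < (dmat v p (v i z.1)).det * (dmat v p (v i z.2)).det then 1 else 0
  have hi : ∀ i, 3 * ∑ p ∈ N, ∑ z ∈ (S i) ×ˢ (S i), h i p z
      ≤ 2 * ∑ p ∈ N, (S i).card ^ 2 := by
    intro i
    have e0 : ∑ p ∈ N, ∑ z ∈ (S i) ×ˢ (S i), h i p z
        = ∑ q ∈ N ×ˢ ((S i) ×ˢ (S i)), h i q.1 q.2 := by rw [Finset.sum_product]
    have e1 : ∑ q ∈ N ×ˢ ((S i) ×ˢ (S i)), h i q.1 q.2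
        = ∑ q ∈ N ×ˢ ((S i) ×ˢ (S i)), h i (Function.update q.1 i q.2.1) (q.1 i, q.2.2) := by
      refine Finset.sum_nbij' (fun q => (Function.update q.1 i q.2.1, (q.1 i, q.2.2)))
        (fun q => (Function.update q.1 i q.2.1, (q.1 i, q.2.2))) ?_ ?_ ?_ ?_ ?_
      · rintro ⟨p, x, y⟩ hq
        simp only [Finset.mem_product, hN, Fintype.mem_piFinset] at hq ⊢
        refine ⟨fun j => ?_, hq.1 i, hq.2.2⟩
        by_cases hj : j = i
        · subst hj; simpa using hq.2.1
        · simpa [hj] using hq.1 j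
      · rintro ⟨p, x, y⟩ hq
        simp only [Finset.mem_product, hN, Fintype.mem_piFinset] at hq ⊢
        refine ⟨fun j => ?_, hq.1 i, hq.2.2⟩
        by_cases hj : j = i
        · subst hj; simpa using hq.2.1
        · simpa [hj] using hq.1 j
      · rintro ⟨p, x, y⟩ hq
        simp
      · rintro ⟨p, x, y⟩ hq
        simp
      · rintro ⟨p, x, y⟩ hq
        simp
    have e2 : ∑ q ∈ N ×ˢ ((S i) ×ˢ (S i)), h i q.1 q.2
        = ∑ q ∈ N ×ˢ ((S i) ×ˢ (S i)), h i (Function.update q.1 i q.2.2) (q.2.1, q.1 i) := by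
      refine Finset.sum_nbij' (fun q => (Function.update q.1 i q.2.2, (q.2.1, q.1 i)))
        (fun q => (Function.update q.1 i q.2.2, (q.2.1, q.1 i))) ?_ ?_ ?_ ?_ ?_
      · rintro ⟨p, x, y⟩ hq
        simp only [Finset.mem_product, hN, Fintype.mem_piFinset] at hq ⊢
        refine ⟨fun j => ?_, hq.2.1, hq.1 i⟩
        by_cases hj : j = i
        · subst hj; simpa using hq.2.2
        · simpa [hj] using hq.1 j
      · rintro ⟨p, x, y⟩ hq
        simp only [Finset.mem_product, hN, Fintype.mem_piFinset] at hq ⊢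
        refine ⟨fun j => ?_, hq.2.1, hq.1 i⟩
        by_cases hj : j = i
        · subst hj; simpa using hq.2.2
        · simpa [hj] using hq.1 j
      · rintro ⟨p, x, y⟩ hq
        simp
      · rintro ⟨p, x, y⟩ hq
        simp
      · rintro ⟨p, x, y⟩ hq
        simp
    have e3 : ∑ p ∈ N, (S i).card ^ 2 = ∑ q ∈ N ×ˢ ((S i) ×ˢ (S i)), 1 := by
      simp [Finset.card_product, pow_two]
    have e4 : ∑ q ∈ N ×ˢ ((S i) ×ˢ (S i)), (h i q.1 q.2 +
        h i (Function.update q.1 i q.2.1) (q.1 i, q.2.2) +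
        h i (Function.update q.1 i q.2.2) (q.2.1, q.1 i))
        ≤ ∑ q ∈ N ×ˢ ((S i) ×ˢ (S i)), 2 := by
      refine Finset.sum_le_sum ?_
      rintro ⟨p, x, y⟩ hq
      have := split_three v p i (p i) x y
      rw [Function.update_eq_self] at this
      simp only [h]
      split_ifs with h1 h2 h3 <;> try omega
      exact (this h1 h2 h3).elim
    rw [Finset.sum_add_distrib, Finset.sum_add_distrib, ← e1, ← e2] at e4
    rw [e0, e3]
    simp only [Finset.sum_const, smul_eq_mul] at e4 ⊢
    omega
  have hsum : ∑ p ∈ N, 3 * ∑ i, ∑ z ∈ (S i) ×ˢ (S i), h i p z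
      ≤ ∑ p ∈ N, 2 * ∑ i, (S i).card ^ 2 := by
    rw [← Finset.mul_sum, ← Finset.mul_sum, Finset.sum_comm, Finset.sum_comm (s := N),
      Finset.mul_sum, Finset.mul_sum]
    exact Finset.sum_le_sum fun i _ => hi i
  obtain ⟨p, hp, hle⟩ := Finset.exists_le_of_sum_le hNne hsum
  obtain ⟨u, hu⟩ := hgen p hp
  refine ⟨fun b => (dmat v p (Pi.single b 1)).det, ?_, ?_⟩
  · intro h0
    apply hu
    rw [dt_lin]
    refine Finset.sum_eq_zero fun b _ => ?_
    have := congrFun h0 b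
    simp only [Pi.zero_apply] at this
    rw [this, zero_mul]
  · refine le_trans (le_of_eq ?_) hle
    congr 1
    refine Finset.sum_congr rfl fun i _ => ?_
    rw [Finset.card_filter]
    simp only [h, ← dt_lin]

lemma split_limit (v : ι → X → Option ι → ℝ) (S : ι → Finset X)
    (hS : ∀ i, (S i).Nonempty) :
    ∃ c : Option ι → ℝ, c ≠ 0 ∧
      3 * ∑ i, (((S i) ×ˢ (S i)).filter fun z =>
        0 < (∑ b, c b * v i z.1 b) * (∑ b, c b * v i z.2 b)).card ≤ 2 * ∑ i, (S i).card ^ 2 := by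
  let w : ℝ → ι → X → Option ι → ℝ := fun η i x b => v i x b + η * (if b = some i then 1 else 0)
  -- for all but finitely many η the perturbed system is generic
  let A : (ι → X) → Matrix (Option ι) (Option ι) ℝ := fun p => - dmat v p 0
  let bad : Set ℝ := ⋃ p ∈ Fintype.piFinset S, {η | (A p).charpoly.IsRoot η}
  have hbad : bad.Finite := by
    refine Set.Finite.biUnion (Finset.finite_toSet _) fun p _ => ?_
    exact Polynomial.finite_setOfPred_isRoot (Matrix.charpoly_monic _).ne_zero
  have hgood : ∀ η, η ∉ bad → ∀ p ∈ Fintype.piFinset S, ∃ u, (dmat (w η) p u).det ≠ 0 := by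
    intro η hη p hp
    refine ⟨Pi.single none η, fun h0 => hη ?_⟩
    simp only [bad, Set.mem_iUnion]
    refine ⟨p, hp, ?_⟩
    change Polynomial.eval η _ = 0
    rw [Matrix.eval_charpoly, ← h0]
    congr 1
    ext a b
    rcases a with _ | i
    · rcases b with _ | j <;> simp [A, dmat, Matrix.scalar_apply, Matrix.diagonal_apply]
    · rcases b with _ | j
      · simp [A, dmat, w, Matrix.scalar_apply, Matrix.diagonal_apply]
      · by_cases hij : i = j
        · subst hij
          simp [A, dmat, w, Matrix.scalar_apply, Matrix.diagonal_apply, add_comm]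
        · simp [A, dmat, w, Matrix.scalar_apply, Matrix.diagonal_apply, hij, Ne.symm hij, eq_comm]
  -- a sequence tending to zero of good parameters
  have hseq : ∀ n : ℕ, ∃ η : ℝ, η ∉ bad ∧ 0 < η ∧ η < 1 / ((n : ℝ) + 1) := by
    intro n
    have hinf : (Set.Ioo (0:ℝ) (1 / ((n : ℝ) + 1))).Infinite := Set.Ioo_infinite (by positivity)
    obtain ⟨η, h1, h2⟩ := hinf.exists_notMem_finite hbad
    exact ⟨η, h2, h1.1, h1.2⟩
  choose η hη1 hη2 hη3 using hseq
  have hηlim : Filter.Tendsto η Filter.atTop (nhds 0) :=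
    squeeze_zero (fun n => (hη2 n).le) (fun n => (hη3 n).le) tendsto_one_div_add_atTop_nhds_zero_nat
  have hc : ∀ n, ∃ c : Option ι → ℝ, c ∈ Metric.sphere (0 : Option ι → ℝ) 1 ∧
      3 * ∑ i, (((S i) ×ˢ (S i)).filter fun z =>
        0 < (∑ b, c b * w (η n) i z.1 b) * (∑ b, c b * w (η n) i z.2 b)).card
        ≤ 2 * ∑ i, (S i).card ^ 2 := by
    intro n
    obtain ⟨c, hc0, hc⟩ := split_generic (w (η n)) S hS (hgood _ (hη1 n))
    have hpos : 0 < ‖c‖ := norm_pos_iff.2 hc0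
    refine ⟨‖c‖⁻¹ • c, ?_, ?_⟩
    · simp [norm_smul, hpos.ne']
    · refine le_trans (le_of_eq ?_) hc
      congr 1
      refine Finset.sum_congr rfl fun i _ => ?_
      congr 1
      refine Finset.filter_congr fun z _ => ?_
      have : ∀ x, ∑ b, (‖c‖⁻¹ • c) b * w (η n) i x b = ‖c‖⁻¹ * ∑ b, c b * w (η n) i x b := by
        intro x
        rw [Finset.mul_sum]
        refine Finset.sum_congr rfl fun b _ => ?_
        simp [mul_assoc]
      rw [this, this]
      have e : ‖c‖⁻¹ * (∑ b, c b * w (η n) i z.1 b) * (‖c‖⁻¹ * ∑ b, c b * w (η n) i z.2 b)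
        = (‖c‖⁻¹ * ‖c‖⁻¹) * ((∑ b, c b * w (η n) i z.1 b) * ∑ b, c b * w (η n) i z.2 b) := by ring
      rw [e]
      exact mul_pos_iff_of_pos_left (by positivity)
  choose c hcs hcc using hc
  obtain ⟨c0, hc0, φ, hφ, hlim⟩ := (isCompact_sphere (0 : Option ι → ℝ) 1).tendsto_subseq hcs
  refine ⟨c0, ?_, ?_⟩
  · rintro rfl
    simp at hc0
  · have hev : ∀ᶠ n in Filter.atTop, ∀ i, ∀ z ∈ ((S i) ×ˢ (S i)),
        0 < (∑ b, c0 b * v i z.1 b) * (∑ b, c0 b * v i z.2 b) →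
        0 < (∑ b, c (φ n) b * w (η (φ n)) i z.1 b) * (∑ b, c (φ n) b * w (η (φ n)) i z.2 b) := by
      rw [Filter.eventually_all]
      intro i
      rw [Filter.eventually_all_finset]
      intro z _
      by_cases hz : 0 < (∑ b, c0 b * v i z.1 b) * (∑ b, c0 b * v i z.2 b)
      · have hl : ∀ x, Filter.Tendsto (fun n => ∑ b, c (φ n) b * w (η (φ n)) i x b) Filter.atTop
            (nhds (∑ b, c0 b * v i x b)) := by
          intro x
          refine tendsto_finsetSum _ fun b _ => ?_
          refine ((tendsto_pi_nhds.1 hlim) b).mul ?_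
          have : Filter.Tendsto (fun n => v i x b + η (φ n) * (if b = some i then 1 else 0))
            Filter.atTop (nhds (v i x b + 0 * (if b = some i then 1 else 0))) :=
            tendsto_const_nhds.add ((hηlim.comp hφ.tendsto_atTop).mul_const _)
          rw [zero_mul, add_zero] at this
          exact this
        filter_upwards [((hl z.1).mul (hl z.2)).eventually (lt_mem_nhds hz)] with n hn _
        exact hn
      · exact Filter.Eventually.of_forall fun n h => (hz h).elim
    obtain ⟨n, hn⟩ := hev.exists
    refine le_trans ?_ (hcc (φ n))
    refine Nat.mul_le_mul_left 3 (Finset.sum_le_sum fun i _ => Finset.card_le_card ?_)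
    intro z hz
    rw [Finset.mem_filter] at hz ⊢
    exact ⟨hz.1, hn i z hz.1 hz.2⟩

end Split

open MvPolynomial in
lemma poly_split (d e : ℕ) {ι : Type} [Fintype ι] [DecidableEq ι]
    (hι : Fintype.card ι < e ^ d) (S : ι → Finset (Fin d → ℝ)) (hS : ∀ i, (S i).Nonempty) :
    ∃ g : MvPolynomial (Fin d) ℝ, g ≠ 0 ∧ g.totalDegree ≤ d * e ∧
      3 * ∑ i, (((S i) ×ˢ (S i)).filter fun z => 0 < eval z.1 g * eval z.2 g).card
        ≤ 2 * ∑ i, (S i).card ^ 2 := by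
  have hcard : Fintype.card (Option ι) ≤ Fintype.card (Fin d → Fin e) := by
    simp only [Fintype.card_option, Fintype.card_fun, Fintype.card_fin]
    omega
  obtain ⟨emb⟩ := Function.Embedding.nonempty_of_card_le hcard
  let mono : Option ι → (Fin d →₀ ℕ) := fun b =>
    Finsupp.equivFunOnFinite.symm (fun j => ((emb b j : Fin e) : ℕ))
  have hmono : Function.Injective mono := by
    intro b b' h
    apply emb.injective
    ext j
    have := DFunLike.congr_fun h j
    simpa [mono] using this
  obtain ⟨c, hc0, hc⟩ := split_limit
    (fun (_ : ι) (x : Fin d → ℝ) (b : Option ι) => ∏ j, x j ^ ((emb b j : Fin e) : ℕ)) S hS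
  have hev : ∀ x : Fin d → ℝ, eval x (∑ b, monomial (mono b) (c b))
      = ∑ b, c b * ∏ j, x j ^ ((emb b j : Fin e) : ℕ) := by
    intro x
    rw [map_sum]
    refine Finset.sum_congr rfl fun b _ => ?_
    rw [eval_monomial, Finsupp.prod_fintype _ _ (by simp)]
    simp [mono]
  refine ⟨∑ b, monomial (mono b) (c b), ?_, ?_, ?_⟩
  · intro h0
    apply hc0
    ext b
    have := congrArg (coeff (mono b)) h0
    rw [coeff_sum] at this
    simpa [coeff_monomial, hmono.eq_iff] using this
  · refine totalDegree_finsetSum_le fun b _ => ?_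
    refine (totalDegree_monomial_le _ _).trans ?_
    rw [Finsupp.sum_fintype _ _ (by simp)]
    calc ∑ j, (mono b) j ≤ ∑ _j : Fin d, e := Finset.sum_le_sum fun j _ => by
            simp only [mono, Finsupp.equivFunOnFinite_symm_apply_apply]
            exact (emb b j).2.le
      _ = d * e := by simp
  · simp only [hev]
    exact hc

/-- Points with different colours are separated by a zero of `f`. -/
def SepBy {d : ℕ} (f : MvPolynomial (Fin d) ℝ) (κ : (Fin d → ℝ) → List SignType) : Prop :=
  ∀ x y, MvPolynomial.eval x f ≠ 0 → MvPolynomial.eval y f ≠ 0 → κ x ≠ κ y →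
    ∃ t ∈ Set.Ioo (0:ℝ) 1, MvPolynomial.eval (x + t • (y - x)) f = 0

/-- A cell of the partition. -/
def pcell {d : ℕ} (P : Finset (Fin d → ℝ)) (f : MvPolynomial (Fin d) ℝ)
    (κ : (Fin d → ℝ) → List SignType) (s : List SignType) : Finset (Fin d → ℝ) :=
  P.filter fun x => MvPolynomial.eval x f ≠ 0 ∧ κ x = s

open MvPolynomial in
lemma eval_sign_change {d : ℕ} (g : MvPolynomial (Fin d) ℝ) (x y : Fin d → ℝ)
    (hx : eval x g ≠ 0) (hy : eval y g ≠ 0)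
    (h : SignType.sign (eval x g) ≠ SignType.sign (eval y g)) :
    ∃ t ∈ Set.Ioo (0:ℝ) 1, eval (x + t • (y - x)) g = 0 := by
  have hcont : Continuous fun t : ℝ => eval (x + t • (y - x)) g :=
    (MvPolynomial.continuous_eval g).comp (by fun_prop)
  have h0 : eval (x + (0:ℝ) • (y - x)) g = eval x g := by simp
  have h1 : eval (x + (1:ℝ) • (y - x)) g = eval y g := by simp
  have hz : ∃ t ∈ Set.Icc (0:ℝ) 1, eval (x + t • (y - x)) g = 0 := by
    rcases lt_or_gt_of_ne hx with hx' | hx' <;> rcases lt_or_gt_of_ne hy with hy' | hy'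
    · exact (h (by rw [sign_neg hx', sign_neg hy'])).elim
    · have := intermediate_value_Icc zero_le_one hcont.continuousOn
      rw [h0, h1] at this
      exact this ⟨hx'.le, hy'.le⟩
    · have := intermediate_value_Icc' zero_le_one hcont.continuousOn
      rw [h0, h1] at this
      exact this ⟨hy'.le, hx'.le⟩
    · exact (h (by rw [sign_pos hx', sign_pos hy'])).elim
  obtain ⟨t, ht, hzt⟩ := hz
  refine ⟨t, ⟨lt_of_le_of_ne ht.1 ?_, lt_of_le_of_ne ht.2 ?_⟩, hzt⟩
  · rintro rfl; rw [h0] at hzt; exact hx hzt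
  · rintro rfl; rw [h1] at hzt; exact hy hzt

open MvPolynomial in
lemma partition_aux (d e : ℕ) (he : 0 < e) (P : Finset (Fin d → ℝ)) (J : ℕ) :
    ∃ (f : MvPolynomial (Fin d) ℝ) (κ : (Fin d → ℝ) → List SignType),
      f ≠ 0 ∧ f.totalDegree ≤ J * (d * e) ∧ SepBy f κ ∧
      3 ^ J * ((P ×ˢ P).filter fun z => eval z.1 f ≠ 0 ∧ eval z.2 f ≠ 0 ∧ κ z.1 = κ z.2 ∧
        P.card < e ^ d * (pcell P f κ (κ z.1)).card).card ≤ 2 ^ J * P.card ^ 2 := by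
  induction J with
  | zero =>
    refine ⟨1, fun _ => [], one_ne_zero, by simp, ?_, ?_⟩
    · intro x y _ _ h; exact (h rfl).elim
    · simp only [pow_zero, one_mul]
      refine (Finset.card_filter_le _ _).trans ?_
      rw [Finset.card_product, pow_two]
  | succ J ih =>
    obtain ⟨f, κ, hf0, hfd, hsep, hcount⟩ := ih
    set T := (P.image κ).filter fun s => P.card < e ^ d * (pcell P f κ s).card with hT
    have hcellsum : ∑ s ∈ T, (pcell P f κ s).card ≤ P.card := by
      rw [← Finset.card_biUnion]
      · apply Finset.card_le_card
        intro x hx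
        simp only [Finset.mem_biUnion, pcell, Finset.mem_filter] at hx
        obtain ⟨_, _, hx, _⟩ := hx
        exact hx
      · intro s _ s' _ hne
        rw [Function.onFun, Finset.disjoint_left]
        intro x hx hx'
        simp only [pcell, Finset.mem_filter] at hx hx'
        exact hne (hx.2.2.symm.trans hx'.2.2)
    have hTcard : T.card < e ^ d := by
      rcases T.eq_empty_or_nonempty with h | h
      · rw [h]; simpa using pow_pos he d
      · have h1 : T.card * P.card < e ^ d * P.card := by
          calc T.card * P.card = ∑ s ∈ T, P.card := by simp
            _ < ∑ s ∈ T, e ^ d * (pcell P f κ s).card :=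
                Finset.sum_lt_sum_of_nonempty h fun s hs => (Finset.mem_filter.1 hs).2
            _ = e ^ d * ∑ s ∈ T, (pcell P f κ s).card := by rw [Finset.mul_sum]
            _ ≤ _ := Nat.mul_le_mul_left _ hcellsum
        exact lt_of_mul_lt_mul_right h1 (Nat.zero_le _)
    obtain ⟨g, hg0, hgd, hg⟩ := poly_split d e (ι := T) (by simpa using hTcard)
      (fun s => pcell P f κ s.1) (by
        rintro ⟨s, hs⟩
        have := (Finset.mem_filter.1 hs).2
        rw [← Finset.card_pos]
        by_contra h
        simp only [not_lt, Nat.le_zero] at h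
        simp only [h, mul_zero] at this
        omega)
    refine ⟨f * g, fun x => SignType.sign (eval x g) :: κ x, mul_ne_zero hf0 hg0, ?_, ?_, ?_⟩
    · refine (totalDegree_mul _ _).trans ?_
      calc _ ≤ J * (d * e) + d * e := add_le_add hfd hgd
        _ = _ := by ring
    · intro x y hx hy hne
      simp only [map_mul, mul_ne_zero_iff] at hx hy
      by_cases hκ : κ x = κ y
      · have hs : SignType.sign (eval x g) ≠ SignType.sign (eval y g) := by
          intro h; apply hne; simp [h, hκ]
        obtain ⟨t, ht, hz⟩ := eval_sign_change g x y hx.2 hy.2 hs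
        exact ⟨t, ht, by rw [map_mul, hz, mul_zero]⟩
      · obtain ⟨t, ht, hz⟩ := hsep x y hx.1 hy.1 hκ
        exact ⟨t, ht, by rw [map_mul, hz, zero_mul]⟩
    · set Φ := ((P ×ˢ P).filter fun z => eval z.1 f ≠ 0 ∧ eval z.2 f ≠ 0 ∧ κ z.1 = κ z.2 ∧
        P.card < e ^ d * (pcell P f κ (κ z.1)).card).card with hΦ
      have hsub : ∀ s σ, pcell P (f * g) (fun x => SignType.sign (eval x g) :: κ x) (σ :: s)
          ⊆ pcell P f κ s := by
        intro s σ x hx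
        simp only [pcell, Finset.mem_filter, map_mul, mul_ne_zero_iff, List.cons.injEq] at hx ⊢
        exact ⟨hx.1, hx.2.1.1, hx.2.2.2⟩
      have hA : ((P ×ˢ P).filter fun z => eval z.1 (f * g) ≠ 0 ∧ eval z.2 (f * g) ≠ 0 ∧
          (SignType.sign (eval z.1 g) :: κ z.1) = (SignType.sign (eval z.2 g) :: κ z.2) ∧
          P.card < e ^ d * (pcell P (f * g) (fun x => SignType.sign (eval x g) :: κ x)
            (SignType.sign (eval z.1 g) :: κ z.1)).card).card
          ≤ ∑ s : T, (((pcell P f κ s.1) ×ˢ (pcell P f κ s.1)).filter fun z =>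
              0 < eval z.1 g * eval z.2 g).card := by
        refine le_trans (Finset.card_le_card ?_) Finset.card_biUnion_le
        rintro ⟨x, y⟩ hz
        simp only [Finset.mem_filter, Finset.mem_product, map_mul, mul_ne_zero_iff,
          List.cons.injEq] at hz
        obtain ⟨⟨hxP, hyP⟩, hx, hy, ⟨hs, hk⟩, hlt⟩ := hz
        have hmem : κ x ∈ T := by
          rw [hT, Finset.mem_filter]
          exact ⟨Finset.mem_image_of_mem _ hxP, hlt.trans_le
            (Nat.mul_le_mul_left _ (Finset.card_le_card (hsub _ _)))⟩
        simp only [Finset.mem_biUnion]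
        refine ⟨⟨κ x, hmem⟩, Finset.mem_univ _, ?_⟩
        simp only [Finset.mem_filter, Finset.mem_product, pcell]
        refine ⟨⟨⟨hxP, hx.1, trivial⟩, ⟨hyP, hy.1, hk.symm⟩⟩, ?_⟩
        rcases lt_or_gt_of_ne hx.2 with hx' | hx' <;> rcases lt_or_gt_of_ne hy.2 with hy' | hy'
        · exact mul_pos_of_neg_of_neg hx' hy'
        · rw [sign_neg hx', sign_pos hy'] at hs; exact absurd hs (by decide)
        · rw [sign_pos hx', sign_neg hy'] at hs; exact absurd hs (by decide)
        · exact mul_pos hx' hy'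
      have hB : ∑ s : T, (pcell P f κ s.1).card ^ 2 ≤ Φ := by
        have : ∀ s : T, (pcell P f κ s.1).card ^ 2
            = ((pcell P f κ s.1) ×ˢ (pcell P f κ s.1)).card := by
          intro s; rw [Finset.card_product, pow_two]
        simp only [this]
        rw [← Finset.card_biUnion]
        · apply Finset.card_le_card
          rintro ⟨x, y⟩ hz
          simp only [Finset.mem_biUnion, Finset.mem_product, pcell, Finset.mem_filter] at hz
          obtain ⟨⟨s, hs⟩, _, ⟨hx, hx0, hxs⟩, ⟨hy, hy0, hys⟩⟩ := hz
          simp only at hxs hys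
          simp only [Finset.mem_filter, Finset.mem_product]
          refine ⟨⟨hx, hy⟩, hx0, hy0, hxs.trans hys.symm, ?_⟩
          rw [hxs]
          exact (Finset.mem_filter.1 hs).2
        · rintro ⟨s, hs⟩ _ ⟨s', hs'⟩ _ hne
          rw [Function.onFun, Finset.disjoint_left]
          rintro ⟨x, y⟩ hx hx'
          simp only [pcell, Finset.mem_filter, Finset.mem_product] at hx hx'
          exact hne (Subtype.ext (hx.1.2.2.symm.trans hx'.1.2.2))
      have h3 : 3 ^ J * (2 * Φ) ≤ 2 ^ (J + 1) * P.card ^ 2 := by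
        calc 3 ^ J * (2 * Φ) = 2 * (3 ^ J * Φ) := by ring
          _ ≤ 2 * (2 ^ J * P.card ^ 2) := Nat.mul_le_mul_left _ hcount
          _ = _ := by ring
      refine le_trans ?_ h3
      rw [pow_succ, mul_assoc]
      refine Nat.mul_le_mul_left _ ?_
      exact (Nat.mul_le_mul_left 3 hA).trans (hg.trans (Nat.mul_le_mul_left 2 hB))

lemma partition_thm (d s : ℕ) (P : Finset (Fin d → ℝ)) :
    ∃ (f : MvPolynomial (Fin d) ℝ) (κ : (Fin d → ℝ) → List SignType),
      f ≠ 0 ∧ f.totalDegree ≤ (4 * d * s) * (d * 2 ^ s) ∧ SepBy f κ ∧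
      ∀ c, 2 ^ (d * s) * (pcell P f κ c).card ≤ P.card := by
  obtain ⟨f, κ, h1, h2, h3, h4⟩ := partition_aux d (2 ^ s) (by positivity) P (4 * d * s)
  refine ⟨f, κ, h1, h2, h3, fun c => ?_⟩
  by_contra hlt
  push Not at hlt
  have hr : (2 ^ s) ^ d = 2 ^ (d * s) := by rw [← pow_mul, mul_comm]
  rw [hr] at h4
  set r := 2 ^ (d * s) with hrdef
  set Φ := ((P ×ˢ P).filter fun z => MvPolynomial.eval z.1 f ≠ 0 ∧ MvPolynomial.eval z.2 f ≠ 0 ∧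
    κ z.1 = κ z.2 ∧ P.card < r * (pcell P f κ (κ z.1)).card).card with hΦ
  have hle : (pcell P f κ c).card ^ 2 ≤ Φ := by
    rw [pow_two, ← Finset.card_product]
    apply Finset.card_le_card
    rintro ⟨x, y⟩ hz
    simp only [Finset.mem_product, pcell, Finset.mem_filter] at hz
    simp only [Finset.mem_filter, Finset.mem_product]
    refine ⟨⟨hz.1.1, hz.2.1⟩, hz.1.2.1, hz.2.2.1, hz.1.2.2.trans hz.2.2.2.symm, ?_⟩
    rw [hz.1.2.2]
    exact hlt
  have hlt2 : P.card ^ 2 < r ^ 2 * Φ := by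
    calc P.card ^ 2 < (r * (pcell P f κ c).card) ^ 2 := Nat.pow_lt_pow_left hlt (by norm_num)
      _ = r ^ 2 * (pcell P f κ c).card ^ 2 := by ring
      _ ≤ _ := Nat.mul_le_mul_left _ hle
  have hpow : 2 ^ (4 * d * s) * r ^ 2 ≤ 3 ^ (4 * d * s) := by
    have e1 : (2:ℕ) ^ (4 * d * s) = 16 ^ (d * s) := by
      rw [show 4 * d * s = 4 * (d * s) by ring, pow_mul]; norm_num
    have e2 : (3:ℕ) ^ (4 * d * s) = 81 ^ (d * s) := by
      rw [show 4 * d * s = 4 * (d * s) by ring, pow_mul]; norm_num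
    have e3 : r ^ 2 = 4 ^ (d * s) := by
      rw [hrdef, ← pow_mul, mul_comm, pow_mul]; norm_num
    rw [e1, e2, e3, ← mul_pow]
    exact Nat.pow_le_pow_left (by norm_num) _
  have : 3 ^ (4 * d * s) * P.card ^ 2 < 3 ^ (4 * d * s) * P.card ^ 2 := by
    calc 3 ^ (4 * d * s) * P.card ^ 2 < 3 ^ (4 * d * s) * (r ^ 2 * Φ) :=
          Nat.mul_lt_mul_of_pos_left hlt2 (by positivity)
      _ = r ^ 2 * (3 ^ (4 * d * s) * Φ) := by ring
      _ ≤ r ^ 2 * (2 ^ (4 * d * s) * P.card ^ 2) := Nat.mul_le_mul_left _ h4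
      _ = (2 ^ (4 * d * s) * r ^ 2) * P.card ^ 2 := by ring
      _ ≤ _ := Nat.mul_le_mul_right _ hpow
  exact lt_irrefl _ this

/-- `p` lies on the line parametrised by `a l + t b l`. -/
def OnL {d : ℕ} {Λ : Type} (a b : Λ → Fin d → ℝ) (p : Fin d → ℝ) (l : Λ) : Prop :=
  ∃ t : ℝ, p = a l + t • b l

/-- Number of incidences for an abstract relation. -/
def icount {X Λ : Type} (R : X → Λ → Prop) (P : Finset X) (L : Finset Λ) : ℕ :=
  ∑ l ∈ L, (P.filter fun p => R p l).card

/-- Restriction of a polynomial to a line. -/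
def lpoly {d : ℕ} (f : MvPolynomial (Fin d) ℝ) (a b : Fin d → ℝ) : Polynomial ℝ :=
  MvPolynomial.aeval (fun i => Polynomial.C (a i) + Polynomial.C (b i) * Polynomial.X) f

lemma lpoly_eval {d : ℕ} (f : MvPolynomial (Fin d) ℝ) (a b : Fin d → ℝ) (t : ℝ) :
    (lpoly f a b).eval t = MvPolynomial.eval (a + t • b) f := by
  rw [lpoly, ← Polynomial.coe_evalRingHom, MvPolynomial.aeval_def, MvPolynomial.eval,
    MvPolynomial.hom_eval₂]
  have h1 : (Polynomial.evalRingHom t).comp (algebraMap ℝ (Polynomial ℝ)) = RingHom.id ℝ := by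
    refine RingHom.ext fun x => ?_
    simp only [RingHom.comp_apply, Polynomial.algebraMap_eq, Polynomial.coe_evalRingHom,
      Polynomial.eval_C, RingHom.id_apply]
  have h2 : (fun i => Polynomial.evalRingHom t
      (Polynomial.C (a i) + Polynomial.C (b i) * Polynomial.X)) = a + t • b := by
    funext i
    simp only [Polynomial.coe_evalRingHom, Polynomial.eval_add, Polynomial.eval_mul,
      Polynomial.eval_C, Polynomial.eval_X, Pi.add_apply, Pi.smul_apply, smul_eq_mul]
    ring
  rw [h1, h2]
  rfl

lemma lpoly_deg {d : ℕ} (f : MvPolynomial (Fin d) ℝ) (a b : Fin d → ℝ) :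
    (lpoly f a b).natDegree ≤ f.totalDegree := by
  have := MvPolynomial.aeval_natDegree_le (m := f.totalDegree) (n := 1) f le_rfl
    (fun i => Polynomial.C (a i) + Polynomial.C (b i) * Polynomial.X) (by
      intro i
      rw [add_comm]
      exact Polynomial.natDegree_linear_le)
  simpa [lpoly] using this

lemma line_zeros {d : ℕ} {Λ : Type} (a b : Λ → Fin d → ℝ) (f : MvPolynomial (Fin d) ℝ) (l : Λ)
    (hl : ¬ ∀ t : ℝ, MvPolynomial.eval (a l + t • b l) f = 0) (P0 : Finset (Fin d → ℝ))
    (hP : ∀ p ∈ P0, MvPolynomial.eval p f = 0) :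
    (P0.filter fun p => OnL a b p l).card ≤ f.totalDegree := by
  have hne : lpoly f (a l) (b l) ≠ 0 := by
    intro h0; apply hl; intro t; rw [← lpoly_eval, h0]; simp
  calc _ ≤ ((lpoly f (a l) (b l)).roots.toFinset.image fun t : ℝ => a l + t • b l).card := by
        apply Finset.card_le_card
        intro p hp
        obtain ⟨hp, t, rfl⟩ := Finset.mem_filter.1 hp
        refine Finset.mem_image.2 ⟨t, ?_, rfl⟩
        rw [Multiset.mem_toFinset, Polynomial.mem_roots hne, Polynomial.IsRoot, lpoly_eval]
        exact hP _ hp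
    _ ≤ (lpoly f (a l) (b l)).roots.toFinset.card := Finset.card_image_le
    _ ≤ _ := Multiset.toFinset_card_le _
    _ ≤ (lpoly f (a l) (b l)).natDegree := Polynomial.card_roots' _
    _ ≤ _ := lpoly_deg _ _ _

lemma line_cells {d : ℕ} {Λ : Type} (a b : Λ → Fin d → ℝ) (f : MvPolynomial (Fin d) ℝ) (l : Λ)
    (κ : (Fin d → ℝ) → List SignType) (hsep : SepBy f κ)
    (P : Finset (Fin d → ℝ)) (T : Finset (List SignType)) :
    (T.filter fun c => ∃ p ∈ pcell P f κ c, OnL a b p l).card ≤ f.totalDegree + 1 := by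
  by_cases hl : ∀ t : ℝ, MvPolynomial.eval (a l + t • b l) f = 0
  · rw [Finset.filter_false_of_mem]
    · simp
    · rintro c _ ⟨p, hp, t, rfl⟩
      exact (Finset.mem_filter.1 hp).2.1 (hl t)
  have hne : lpoly f (a l) (b l) ≠ 0 := by
    intro h0; apply hl; intro t; rw [← lpoly_eval, h0]; simp
  set T' := T.filter fun c => ∃ p ∈ pcell P f κ c, OnL a b p l with hT'
  have hch : ∀ c ∈ T', ∃ t : ℝ, a l + t • b l ∈ pcell P f κ c := by
    intro c hc
    obtain ⟨_, p, hp, t, rfl⟩ := Finset.mem_filter.1 hc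
    exact ⟨t, hp⟩
  choose! τ hτ using hch
  have hκ : ∀ c ∈ T', κ (a l + τ c • b l) = c := fun c hc => (Finset.mem_filter.1 (hτ c hc)).2.2
  have h0 : ∀ c ∈ T', MvPolynomial.eval (a l + τ c • b l) f ≠ 0 :=
    fun c hc => (Finset.mem_filter.1 (hτ c hc)).2.1
  have hinj : Set.InjOn τ T' := by
    intro c hc c' hc' h
    rw [← hκ c hc, ← hκ c' hc', h]
  rw [← Finset.card_image_of_injOn hinj]
  have : (T'.image τ).card ≤ (lpoly f (a l) (b l)).roots.toFinset.card + 1 := by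
    apply Finset.card_le_of_interleaved
    intro x hx y hy hxy _
    obtain ⟨c, hc, rfl⟩ := Finset.mem_image.1 hx
    obtain ⟨c', hc', rfl⟩ := Finset.mem_image.1 hy
    obtain ⟨t, ht, hz⟩ := hsep _ _ (h0 c hc) (h0 c' hc') (by
      rw [hκ c hc, hκ c' hc']; rintro rfl; exact lt_irrefl _ hxy)
    refine ⟨τ c + t * (τ c' - τ c), ?_, ?_, ?_⟩
    · rw [Multiset.mem_toFinset, Polynomial.mem_roots hne, Polynomial.IsRoot, lpoly_eval, ← hz]
      congr 2
      ext i
      simp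
      ring
    · have := mul_pos ht.1 (sub_pos.2 hxy); linarith
    · have := mul_lt_mul_of_pos_right ht.2 (sub_pos.2 hxy); linarith
  refine this.trans (Nat.add_le_add_right ?_ 1)
  exact (Multiset.toFinset_card_le _).trans ((Polynomial.card_roots' _).trans (lpoly_deg _ _ _))

lemma step_lemma {d : ℕ} {Λ : Type} (s : ℕ) (a b : Λ → Fin d → ℝ) (P : Finset (Fin d → ℝ))
    (L : Finset Λ) : ∃ f : MvPolynomial (Fin d) ℝ, f ≠ 0 ∧
      f.totalDegree ≤ (4 * d * s) * (d * 2 ^ s) ∧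
      ∃ (T : Finset (List SignType)) (Pc : List SignType → Finset (Fin d → ℝ))
        (Lc : List SignType → Finset Λ),
        (∀ c ∈ T, Lc c ⊆ L ∧ 2 ^ (d * s) * (Pc c).card ≤ P.card) ∧
        ∑ c ∈ T, (Pc c).card + (P.filter fun p => MvPolynomial.eval p f = 0).card ≤ P.card ∧
        ∑ c ∈ T, (Lc c).card ≤ ((4 * d * s) * (d * 2 ^ s) + 1) * L.card ∧
        icount (OnL a b) P L ≤ ∑ c ∈ T, icount (OnL a b) (Pc c) (Lc c)
          + (4 * d * s) * (d * 2 ^ s) * L.card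
          + icount (OnL a b) (P.filter fun p => MvPolynomial.eval p f = 0)
            (L.filter fun l => ∀ t : ℝ, MvPolynomial.eval (a l + t • b l) f = 0) := by
  obtain ⟨f, κ, hf0, hfd, hsep, hcell⟩ := partition_thm d s P
  set D := (4 * d * s) * (d * 2 ^ s) with hD
  set P0 := P.filter fun p => MvPolynomial.eval p f = 0 with hP0
  set L0 := L.filter fun l => ∀ t : ℝ, MvPolynomial.eval (a l + t • b l) f = 0 with hL0
  refine ⟨f, hf0, hfd, P.image κ, pcell P f κ,
    fun c => L.filter fun l => ∃ p ∈ pcell P f κ c, OnL a b p l,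
    fun c _ => ⟨Finset.filter_subset _ _, hcell c⟩, ?_, ?_, ?_⟩
  · have : ∑ c ∈ P.image κ, (pcell P f κ c).card
        = (P.filter fun p => ¬ MvPolynomial.eval p f = 0).card := by
      rw [Finset.card_eq_sum_card_image κ (P.filter fun p => ¬ MvPolynomial.eval p f = 0)]
      symm
      apply Finset.sum_subset_zero_on_sdiff
      · exact Finset.image_subset_image (Finset.filter_subset _ _)
      · intro c hc
        rw [Finset.card_eq_zero, Finset.eq_empty_iff_forall_notMem]
        intro x hx
        obtain ⟨h1, h2, h3⟩ := Finset.mem_filter.1 hx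
        apply (Finset.mem_sdiff.1 hc).2
        exact Finset.mem_image.2 ⟨x, Finset.mem_filter.2 ⟨h1, h2⟩, h3⟩
      · intro c _
        rw [pcell, Finset.filter_filter]
    rw [this, add_comm]
    exact (Finset.card_filter_add_card_filter_not _).le
  · have : ∑ c ∈ P.image κ, (L.filter fun l => ∃ p ∈ pcell P f κ c, OnL a b p l).card
        = ∑ l ∈ L, ((P.image κ).filter fun c => ∃ p ∈ pcell P f κ c, OnL a b p l).card := by
      simp only [Finset.card_filter]
      exact Finset.sum_comm
    rw [this, mul_comm, ← smul_eq_mul]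
    refine Finset.sum_le_card_nsmul _ _ _ fun l _ => ?_
    exact (line_cells a b f l κ hsep P _).trans (Nat.add_le_add_right hfd 1)
  · -- incidences
    have h1 : ∀ l ∈ L, (P.filter fun p => OnL a b p l).card
        ≤ ∑ c ∈ P.image κ, ((pcell P f κ c).filter fun p => OnL a b p l).card
          + (P0.filter fun p => OnL a b p l).card := by
      intro l _
      refine le_trans ?_ (Nat.add_le_add_right Finset.card_biUnion_le _)
      refine le_trans (Finset.card_le_card ?_) (Finset.card_union_le _ _)
      intro p hp
      obtain ⟨hp, hpl⟩ := Finset.mem_filter.1 hp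
      rw [Finset.mem_union]
      by_cases h : MvPolynomial.eval p f = 0
      · right; exact Finset.mem_filter.2 ⟨Finset.mem_filter.2 ⟨hp, h⟩, hpl⟩
      · left
        refine Finset.mem_biUnion.2 ⟨κ p, Finset.mem_image_of_mem _ hp, ?_⟩
        exact Finset.mem_filter.2 ⟨Finset.mem_filter.2 ⟨hp, h, rfl⟩, hpl⟩
    have h2 : ∑ l ∈ L, ∑ c ∈ P.image κ, ((pcell P f κ c).filter fun p => OnL a b p l).card
        ≤ ∑ c ∈ P.image κ, icount (OnL a b) (pcell P f κ c)
          (L.filter fun l => ∃ p ∈ pcell P f κ c, OnL a b p l) := by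
      rw [Finset.sum_comm]
      refine Finset.sum_le_sum fun c _ => ?_
      rw [icount]
      apply le_of_eq
      symm
      apply Finset.sum_subset (Finset.filter_subset _ _)
      intro l hl hl'
      rw [Finset.card_eq_zero, Finset.eq_empty_iff_forall_notMem]
      intro p hp
      obtain ⟨hp, hpl⟩ := Finset.mem_filter.1 hp
      exact hl' (Finset.mem_filter.2 ⟨hl, p, hp, hpl⟩)
    have h3 : ∑ l ∈ L, (P0.filter fun p => OnL a b p l).card
        ≤ D * L.card + icount (OnL a b) P0 L0 := by
      rw [← Finset.sum_filter_add_sum_filter_not L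
        (fun l => ∀ t : ℝ, MvPolynomial.eval (a l + t • b l) f = 0), add_comm]
      refine Nat.add_le_add ?_ le_rfl
      calc _ ≤ (L.filter fun l => ¬ ∀ t : ℝ, MvPolynomial.eval (a l + t • b l) f = 0).card • D := by
            refine Finset.sum_le_card_nsmul _ _ _ fun l hl => ?_
            exact (line_zeros a b f l (Finset.mem_filter.1 hl).2 P0
              (fun p hp => (Finset.mem_filter.1 hp).2)).trans hfd
        _ ≤ _ := by
            rw [smul_eq_mul, mul_comm]
            exact Nat.mul_le_mul_left _ (Finset.card_filter_le _ _)
    calc icount (OnL a b) P L ≤ ∑ l ∈ L, (∑ c ∈ P.image κ,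
          ((pcell P f κ c).filter fun p => OnL a b p l).card
          + (P0.filter fun p => OnL a b p l).card) := Finset.sum_le_sum h1
      _ ≤ _ := by
          rw [Finset.sum_add_distrib, add_assoc]
          exact Nat.add_le_add h2 h3

/-- Two points determine a line. -/
def PairUniq {X Λ : Type} (R : X → Λ → Prop) (L : Finset Λ) : Prop :=
  ∀ l ∈ L, ∀ l' ∈ L, ∀ p p', p ≠ p' → R p l → R p' l → R p l' → R p' l' → l = l'

lemma icount_le_mul {X Λ : Type} (R : X → Λ → Prop) (P : Finset X) (L : Finset Λ) :
    icount R P L ≤ P.card * L.card := by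
  rw [icount, mul_comm, ← smul_eq_mul]
  exact Finset.sum_le_card_nsmul _ _ _ fun l _ => Finset.card_filter_le _ _

lemma icount_le_sq {X Λ : Type} (R : X → Λ → Prop) (P : Finset X) (L : Finset Λ)
    (h : PairUniq R L) : icount R P L ≤ P.card ^ 2 + L.card := by
  have h1 : ∑ l ∈ L, (P.filter fun p => R p l).offDiag.card ≤ P.card ^ 2 := by
    rw [← Finset.card_biUnion]
    · rw [pow_two, ← Finset.card_product]
      apply Finset.card_le_card
      rintro ⟨x, y⟩ hz
      simp only [Finset.mem_biUnion, Finset.mem_offDiag, Finset.mem_filter] at hz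
      obtain ⟨l, _, hx, hy, _⟩ := hz
      exact Finset.mem_product.2 ⟨hx.1, hy.1⟩
    · intro l hl l' hl' hne
      rw [Function.onFun, Finset.disjoint_left]
      rintro ⟨x, y⟩ hz hz'
      simp only [Finset.mem_offDiag, Finset.mem_filter] at hz hz'
      exact hne (h l hl l' hl' x y hz.2.2 hz.1.2 hz.2.1.2 hz'.1.2 hz'.2.1.2)
  calc icount R P L ≤ ∑ l ∈ L, ((P.filter fun p => R p l).offDiag.card + 1) := by
        refine Finset.sum_le_sum fun l _ => ?_
        rw [Finset.offDiag_card]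
        generalize (P.filter fun p => R p l).card = k
        rcases k with _ | _ | k
        · simp
        · simp
        · have : (k + 1 + 1) * (k + 1 + 1) = (k+1) * (k+1+1) + (k + 1 + 1) := by ring
          have h2 : (k + 1) * 1 ≤ (k+1) * (k+1+1) := Nat.mul_le_mul_left _ (by omega)
          omega
    _ ≤ _ := by
        rw [Finset.sum_add_distrib]
        simpa using h1

lemma holder_sum {K : Type} (T : Finset K) (x y : K → ℝ) (ν g M m N : ℝ) (hν0 : 0 < ν)
    (hν1 : ν < 1) (hg : 0 ≤ g) (hx : ∀ c ∈ T, 0 ≤ x c) (hy : ∀ c ∈ T, 0 ≤ y c)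
    (hM : ∀ c ∈ T, x c ≤ M) (hM0 : 0 ≤ M)
    (hm : ∑ c ∈ T, x c ≤ m) (hN : ∑ c ∈ T, y c ≤ N) :
    ∑ c ∈ T, x c ^ ((1 - ν) + g) * y c ^ ν ≤ M ^ g * (m ^ (1 - ν) * N ^ ν) := by
  have hν' : 0 < 1 - ν := by linarith
  have h1 : ∑ c ∈ T, x c ^ (1 - ν) * y c ^ ν ≤ m ^ (1 - ν) * N ^ ν := by
    have hpq : (1 - ν)⁻¹.HolderConjugate ν⁻¹ := by
      rw [Real.holderConjugate_iff]
      constructor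
      · exact (one_lt_inv₀ hν').2 (by linarith)
      · rw [inv_inv, inv_inv]; ring
    have := Real.inner_le_Lp_mul_Lq_of_nonneg T hpq (f := fun c => x c ^ (1 - ν))
      (g := fun c => y c ^ ν) (fun c hc => Real.rpow_nonneg (hx c hc) _)
      (fun c hc => Real.rpow_nonneg (hy c hc) _)
    refine this.trans ?_
    have e1 : ∑ c ∈ T, (x c ^ (1 - ν)) ^ (1 - ν)⁻¹ = ∑ c ∈ T, x c :=
      Finset.sum_congr rfl fun c hc => Real.rpow_rpow_inv (hx c hc) hν'.ne'
    have e2 : ∑ c ∈ T, (y c ^ ν) ^ ν⁻¹ = ∑ c ∈ T, y c :=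
      Finset.sum_congr rfl fun c hc => Real.rpow_rpow_inv (hy c hc) hν0.ne'
    simp only [e1, e2, one_div, inv_inv]
    have s1 := Finset.sum_nonneg hx
    have s2 := Finset.sum_nonneg hy
    have s3 := Real.rpow_nonneg (s1.trans hm) (1 - ν)
    gcongr
  calc ∑ c ∈ T, x c ^ ((1 - ν) + g) * y c ^ ν
      ≤ ∑ c ∈ T, M ^ g * (x c ^ (1 - ν) * y c ^ ν) := by
        refine Finset.sum_le_sum fun c hc => ?_
        rw [Real.rpow_add_of_nonneg (hx c hc) hν'.le hg]
        have a1 := Real.rpow_le_rpow (hx c hc) (hM c hc) hg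
        have a2 := Real.rpow_nonneg (hx c hc) (1 - ν)
        have a3 := Real.rpow_nonneg (hy c hc) ν
        calc x c ^ (1 - ν) * x c ^ g * y c ^ ν = x c ^ g * (x c ^ (1 - ν) * y c ^ ν) := by ring
          _ ≤ _ := mul_le_mul_of_nonneg_right a1 (mul_nonneg a2 a3)
    _ = M ^ g * ∑ c ∈ T, x c ^ (1 - ν) * y c ^ ν := by rw [Finset.mul_sum]
    _ ≤ _ := mul_le_mul_of_nonneg_left h1 (Real.rpow_nonneg hM0 _)

/-- The gain obtained by summing a term over the cells. -/
lemma cell_gain {K : Type} (T : Finset K) (x y : K → ℝ) (ν g r D m n θ : ℝ) (hν0 : 0 < ν)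
    (hν1 : ν < 1) (hg : 0 ≤ g) (hr : 0 < r) (hD : 0 ≤ D) (hm0 : 0 ≤ m) (hn0 : 0 ≤ n)
    (hx : ∀ c ∈ T, 0 ≤ x c) (hy : ∀ c ∈ T, 0 ≤ y c)
    (hM : ∀ c ∈ T, r * x c ≤ m)
    (hm : ∑ c ∈ T, x c ≤ m) (hN : ∑ c ∈ T, y c ≤ D * n)
    (hθ : (1 / r) ^ g * D ^ ν ≤ θ) :
    ∑ c ∈ T, x c ^ ((1 - ν) + g) * y c ^ ν ≤ θ * (m ^ ((1 - ν) + g) * n ^ ν) := by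
  have hν' : 0 < 1 - ν := by linarith
  have := holder_sum T x y ν g (1 / r * m) m (D * n) hν0 hν1 hg hx hy
    (fun c hc => by
      have := hM c hc
      rw [one_div, inv_mul_eq_div, le_div_iff₀ hr]; linarith) (by positivity) hm hN
  refine this.trans ?_
  rw [Real.mul_rpow (by positivity) hm0, Real.mul_rpow hD hn0,
    Real.rpow_add_of_nonneg hm0 hν'.le hg]
  calc (1 / r) ^ g * m ^ g * (m ^ (1 - ν) * (D ^ ν * n ^ ν))
      = ((1 / r) ^ g * D ^ ν) * (m ^ (1 - ν) * m ^ g * n ^ ν) := by ring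
    _ ≤ _ := by gcongr

theorem abstract_induction {X Λ K : Type} (R : X → Λ → Prop) (F : Finset Λ → Prop)
    (hsub : ∀ L L', L' ⊆ L → F L → F L') (huniq : ∀ L, F L → PairUniq R L)
    (ν ε r D β Q m₁ α : ℝ) (hν0 : 0 < ν) (hν1 : ν < 1) (hε : 0 < ε) (hr : 2 ≤ r) (hD : 0 ≤ D)
    (hβ : 0 ≤ β) (hQ : 0 ≤ Q) (hm₁ : 1 ≤ m₁) (hm₁ε : 2 * (D + 3) ≤ m₁ ^ ε)
    (hα1 : 4 * β ≤ α) (hα2 : D ≤ α) (hα3 : m₁ ≤ α) (hα4 : 2 ≤ α)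
    (hθ1 : (1 / r) ^ ((1 - ν) + ε) * (D + 1) ^ ν ≤ 1 / 4)
    (hθ2 : Q = 0 ∨ (1 / r) ^ ((1 / 6 : ℝ) + ε) * (D + 1) ^ (1 / 2 : ℝ) ≤ 1 / 4)
    (hpart : ∀ (P : Finset X) (L : Finset Λ), F L →
      ∃ (T : Finset K) (Pc : K → Finset X) (Lc : K → Finset Λ) (m0 I0 : ℝ),
        0 ≤ m0 ∧
        (∀ c ∈ T, Lc c ⊆ L ∧ r * (Pc c).card ≤ P.card) ∧
        ∑ c ∈ T, ((Pc c).card : ℝ) + m0 ≤ P.card ∧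
        ∑ c ∈ T, ((Lc c).card : ℝ) ≤ (D + 1) * L.card ∧
        (icount R P L : ℝ) ≤ ∑ c ∈ T, (icount R (Pc c) (Lc c) : ℝ) + D * L.card + I0 ∧
        I0 ≤ β * (Q * ((P.card : ℝ) ^ ((2 / 3 : ℝ) + ε) * (L.card : ℝ) ^ (1 / 2 : ℝ))
          + m0 + L.card)) :
    ∀ (P : Finset X) (L : Finset Λ), F L →
      (icount R P L : ℝ) ≤ α * ((P.card : ℝ) ^ (2 * (1 - ν) + ε) * (L.card : ℝ) ^ ν
        + Q * ((P.card : ℝ) ^ ((2 / 3 : ℝ) + ε) * (L.card : ℝ) ^ (1 / 2 : ℝ))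
        + P.card + L.card) := by
  suffices H : ∀ (k : ℕ) (P : Finset X), P.card = k → ∀ (L : Finset Λ), F L →
      (icount R P L : ℝ) ≤ α * ((P.card : ℝ) ^ (2 * (1 - ν) + ε) * (L.card : ℝ) ^ ν
        + Q * ((P.card : ℝ) ^ ((2 / 3 : ℝ) + ε) * (L.card : ℝ) ^ (1 / 2 : ℝ))
        + P.card + L.card) from fun P => H P.card P rfl
  intro k
  induction k using Nat.strong_induction_on with
  | _ k ih =>
  intro P hk L hL
  have hm0 : (0:ℝ) ≤ P.card := Nat.cast_nonneg _
  have hn0 : (0:ℝ) ≤ L.card := Nat.cast_nonneg _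
  set m : ℝ := (P.card : ℝ) with hm
  set n : ℝ := (L.card : ℝ) with hn
  have hA0 : 0 ≤ m ^ (2 * (1 - ν) + ε) * n ^ ν := by positivity
  have hB0 : 0 ≤ Q * (m ^ ((2 / 3 : ℝ) + ε) * n ^ (1 / 2 : ℝ)) := by positivity
  have hα0 : 0 < α := by linarith
  by_cases hsmall : m < m₁
  · have h1 : (icount R P L : ℝ) ≤ m * n := by
      have := icount_le_mul R P L
      rw [hm, hn]; exact_mod_cast this
    have h2 : m * n ≤ α * n := mul_le_mul_of_nonneg_right (by linarith) hn0
    nlinarith [mul_nonneg hα0.le hA0, mul_nonneg hα0.le hB0, mul_nonneg hα0.le hm0]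
  by_cases hbig : m ^ 2 < n
  · have h1 : (icount R P L : ℝ) ≤ m ^ 2 + n := by
      have := icount_le_sq R P L (huniq L hL)
      rw [hm, hn]; exact_mod_cast this
    have h2 : 2 * n ≤ α * n := mul_le_mul_of_nonneg_right (by linarith) hn0
    nlinarith [mul_nonneg hα0.le hA0, mul_nonneg hα0.le hB0, mul_nonneg hα0.le hm0]
  push Not at hsmall hbig
  have hmpos : 0 < m := by linarith
  obtain ⟨T, Pc, Lc, m0, I0, hm00, hc, hPsum, hLsum, hI, hI0⟩ := hpart P L hL
  -- induction hypothesis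
  have hrec : ∀ c ∈ T, (icount R (Pc c) (Lc c) : ℝ) ≤
      α * (((Pc c).card : ℝ) ^ (2 * (1 - ν) + ε) * ((Lc c).card : ℝ) ^ ν
        + Q * (((Pc c).card : ℝ) ^ ((2 / 3 : ℝ) + ε) * ((Lc c).card : ℝ) ^ (1 / 2 : ℝ))
        + (Pc c).card + (Lc c).card) := by
    intro c hcT
    refine ih (Pc c).card ?_ (Pc c) rfl (Lc c) (hsub L _ (hc c hcT).1 hL)
    have h1 := (hc c hcT).2
    have h2 : (2:ℝ) * (Pc c).card ≤ r * (Pc c).card :=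
      mul_le_mul_of_nonneg_right hr (Nat.cast_nonneg _)
    have h3 : ((Pc c).card : ℝ) < P.card := by
      have : (0:ℝ) ≤ (Pc c).card := Nat.cast_nonneg _
      linarith
    rw [← hk]; exact_mod_cast h3
  have hPsum' : ∑ c ∈ T, ((Pc c).card : ℝ) ≤ m := by linarith
  have hg1 : ∑ c ∈ T, ((Pc c).card : ℝ) ^ (2 * (1 - ν) + ε) * ((Lc c).card : ℝ) ^ ν
      ≤ 1 / 4 * (m ^ (2 * (1 - ν) + ε) * n ^ ν) := by
    have := cell_gain T (fun c => ((Pc c).card : ℝ)) (fun c => ((Lc c).card : ℝ)) ν ((1 - ν) + ε)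
      r (D + 1) m n (1 / 4) hν0 hν1 (by linarith) (by linarith) (by linarith) hm0 hn0
      (fun _ _ => Nat.cast_nonneg _) (fun _ _ => Nat.cast_nonneg _) (fun c hcT => (hc c hcT).2)
      hPsum' hLsum hθ1
    rwa [show (1 - ν) + ((1 - ν) + ε) = 2 * (1 - ν) + ε by ring] at this
  have hg2 : ∑ c ∈ T, Q * (((Pc c).card : ℝ) ^ ((2 / 3 : ℝ) + ε) * ((Lc c).card : ℝ) ^ (1 / 2 : ℝ))
      ≤ 1 / 4 * (Q * (m ^ ((2 / 3 : ℝ) + ε) * n ^ (1 / 2 : ℝ))) := by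
    rcases hθ2 with h0 | hθ2
    · simp [h0]
    · have := cell_gain T (fun c => ((Pc c).card : ℝ)) (fun c => ((Lc c).card : ℝ)) (1 / 2)
        ((1 / 6 : ℝ) + ε)
        r (D + 1) m n (1 / 4) (by norm_num) (by norm_num) (by linarith) (by linarith) (by linarith)
        hm0 hn0
        (fun _ _ => Nat.cast_nonneg _) (fun _ _ => Nat.cast_nonneg _) (fun c hcT => (hc c hcT).2)
        hPsum' hLsum hθ2
      rw [show (1 - 1 / 2 : ℝ) + ((1 / 6 : ℝ) + ε) = 2 / 3 + ε by ring] at this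
      rw [← Finset.mul_sum]
      calc _ ≤ Q * (1 / 4 * (m ^ ((2 / 3 : ℝ) + ε) * n ^ (1 / 2 : ℝ))) :=
            mul_le_mul_of_nonneg_left this hQ
        _ = _ := by ring
  have hS : ∑ c ∈ T, (icount R (Pc c) (Lc c) : ℝ) ≤
      α * (1 / 4 * (m ^ (2 * (1 - ν) + ε) * n ^ ν)
        + 1 / 4 * (Q * (m ^ ((2 / 3 : ℝ) + ε) * n ^ (1 / 2 : ℝ)))
        + (m - m0) + (D + 1) * n) := by
    refine (Finset.sum_le_sum hrec).trans ?_
    rw [← Finset.mul_sum]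
    refine mul_le_mul_of_nonneg_left ?_ hα0.le
    rw [Finset.sum_add_distrib, Finset.sum_add_distrib, Finset.sum_add_distrib]
    linarith
  -- absorb the linear term
  have habs : 2 * (D + 3) * n ≤ m ^ (2 * (1 - ν) + ε) * n ^ ν := by
    have h1 : n ^ (1 - ν) ≤ m ^ (2 * (1 - ν)) := by
      rw [Real.rpow_mul hm0]
      refine Real.rpow_le_rpow hn0 ?_ (by linarith)
      exact_mod_cast hbig
    have h2 : m₁ ^ ε ≤ m ^ ε := Real.rpow_le_rpow (by linarith) hsmall hε.le
    have h3 : n = n ^ (1 - ν) * n ^ ν := by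
      rw [← Real.rpow_add_of_nonneg hn0 (by linarith) hν0.le]; simp
    rw [Real.rpow_add hmpos]
    calc 2 * (D + 3) * n = 2 * (D + 3) * (n ^ (1 - ν) * n ^ ν) := by rw [← h3]
      _ ≤ m ^ ε * (m ^ (2 * (1 - ν)) * n ^ ν) := by
          have h4 : 2 * (D + 3) ≤ m ^ ε := hm₁ε.trans h2
          have h5 := Real.rpow_nonneg hn0 ν
          have h6 := Real.rpow_nonneg hn0 (1 - ν)
          have h7 := Real.rpow_nonneg hm0 ε
          exact mul_le_mul h4 (mul_le_mul_of_nonneg_right h1 h5) (mul_nonneg h6 h5) h7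
      _ = _ := by ring
  set A := m ^ (2 * (1 - ν) + ε) * n ^ ν with hA
  set B := Q * (m ^ ((2 / 3 : ℝ) + ε) * n ^ (1 / 2 : ℝ)) with hB
  have e1 : α * (2 * (D + 3) * n) ≤ α * A := mul_le_mul_of_nonneg_left habs hα0.le
  have e2 : β * B ≤ α / 4 * B := mul_le_mul_of_nonneg_right (by linarith) hB0
  have e3 : β * m0 ≤ α * m0 := mul_le_mul_of_nonneg_right (by linarith) hm00
  have e4 : β * n ≤ α * n := mul_le_mul_of_nonneg_right (by linarith) hn0
  have e5 : D * n ≤ α * n := mul_le_mul_of_nonneg_right (by linarith) hn0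
  have e6 : 0 ≤ α * A := mul_nonneg hα0.le hA0
  have e7 : 0 ≤ α * B := mul_nonneg hα0.le hB0
  have e8 : 0 ≤ α * n := mul_nonneg hα0.le hn0
  linarith

/-- Degree of the partitioning polynomial. -/
def pdeg (d s : ℕ) : ℕ := (4 * d * s) * (d * 2 ^ s)

lemma choose_s (d : ℕ) (hd : 1 ≤ d) (ε : ℝ) (hε : 0 < ε) :
    ∃ s : ℕ, 1 ≤ s ∧ ∀ ν : ℝ, 0 < ν → ν < 1 →
      (1 / (2 ^ (d * s) : ℝ)) ^ (ν / d + ε) * ((pdeg d s : ℝ) + 1) ^ ν ≤ 1 / 4 := by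
  have hlt : (2:ℝ) ^ (-ε) < 1 := Real.rpow_lt_one_of_one_lt_of_neg (by norm_num) (by linarith)
  have ht := tendsto_self_mul_const_pow_of_lt_one (r := (2:ℝ) ^ (-ε)) (by positivity) hlt
  have hpos : (0:ℝ) < 1 / (20 * (d:ℝ) ^ 2) := by
    have : (0:ℝ) < d := by exact_mod_cast hd
    positivity
  obtain ⟨s, hs, hs1⟩ := ((ht.eventually (gt_mem_nhds hpos)).and
    (Filter.eventually_ge_atTop 1)).exists
  refine ⟨s, hs1, fun ν hν0 hν1 => ?_⟩
  have hd' : (1:ℝ) ≤ d := by exact_mod_cast hd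
  have hs' : (1:ℝ) ≤ s := by exact_mod_cast hs1
  have h2s : (1:ℝ) ≤ 2 ^ s := one_le_pow₀ (by norm_num)
  have hD : (pdeg d s : ℝ) + 1 ≤ (5 * (d:ℝ) ^ 2 * s) * 2 ^ s := by
    have : (1:ℝ) ≤ (d:ℝ) ^ 2 * s * 2 ^ s := by
      have h1 : (1:ℝ) ≤ (d:ℝ) ^ 2 := one_le_pow₀ hd'
      exact one_le_mul_of_one_le_of_one_le (one_le_mul_of_one_le_of_one_le h1 hs') h2s
    simp only [pdeg]
    push_cast
    nlinarith
  have hC1 : (1:ℝ) ≤ 5 * (d:ℝ) ^ 2 * s := by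
    have h1 : (1:ℝ) ≤ (d:ℝ) ^ 2 := one_le_pow₀ hd'
    nlinarith
  have e1 : ((pdeg d s : ℝ) + 1) ^ ν ≤ (5 * (d:ℝ) ^ 2 * s) * (2:ℝ) ^ (s * ν) := by
    calc ((pdeg d s : ℝ) + 1) ^ ν ≤ ((5 * (d:ℝ) ^ 2 * s) * 2 ^ s) ^ ν :=
          Real.rpow_le_rpow (by positivity) hD hν0.le
      _ = (5 * (d:ℝ) ^ 2 * s) ^ ν * ((2:ℝ) ^ s) ^ ν := Real.mul_rpow (by positivity) (by positivity)
      _ ≤ _ := by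
          have h1 : (5 * (d:ℝ) ^ 2 * s) ^ ν ≤ (5 * (d:ℝ) ^ 2 * s) :=
            Real.rpow_le_self_of_one_le hC1 hν1.le
          have h2 : ((2:ℝ) ^ s) ^ ν = (2:ℝ) ^ (s * ν) := by
            rw [← Real.rpow_natCast, ← Real.rpow_mul (by norm_num)]
          rw [h2]
          exact mul_le_mul_of_nonneg_right h1 (by positivity)
  have e2 : (1 / (2 ^ (d * s) : ℝ)) ^ (ν / d + ε) = (2:ℝ) ^ (-(s * ν)) * (2:ℝ) ^ (-(d * s * ε)) := by
    rw [one_div, ← Real.rpow_natCast, ← Real.rpow_neg (by norm_num), ← Real.rpow_mul (by norm_num),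
      ← Real.rpow_add (by norm_num)]
    congr 1
    push_cast
    field_simp
    ring
  have e3 : (2:ℝ) ^ (-(d * s * ε)) ≤ ((2:ℝ) ^ (-ε)) ^ s := by
    rw [← Real.rpow_natCast, ← Real.rpow_mul (by norm_num)]
    apply Real.rpow_le_rpow_of_exponent_le (by norm_num)
    have : 1 * (s * ε) ≤ d * (s * ε) := mul_le_mul_of_nonneg_right hd' (by positivity)
    linarith
  have e4 : (2:ℝ) ^ (-(s * ν)) * (2:ℝ) ^ (s * ν) = 1 := by
    rw [← Real.rpow_add (by norm_num)]; simp
  rw [e2]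
  calc _ ≤ (2:ℝ) ^ (-(s * ν)) * ((2:ℝ) ^ (-ε)) ^ s * ((5 * (d:ℝ) ^ 2 * s) * (2:ℝ) ^ (s * ν)) := by
        gcongr
    _ = ((2:ℝ) ^ (-(s * ν)) * (2:ℝ) ^ (s * ν)) * (5 * (d:ℝ) ^ 2 * (s * ((2:ℝ) ^ (-ε)) ^ s)) := by
        ring
    _ ≤ 1 * (5 * (d:ℝ) ^ 2 * (1 / (20 * (d:ℝ) ^ 2))) := by
        rw [e4]
        gcongr
    _ = 1 / 4 := by field_simp; norm_num

lemma choose_m (ε D : ℝ) (hε : 0 < ε) (hD : 0 ≤ D) :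
    ∃ m₁ : ℝ, 1 ≤ m₁ ∧ 2 * (D + 3) ≤ m₁ ^ ε := by
  refine ⟨(2 * (D + 3)) ^ ε⁻¹, Real.one_le_rpow (by linarith) (by positivity), ?_⟩
  rw [Real.rpow_inv_rpow (by linarith) hε.ne']

def ba (l : ℝ × ℝ) : Fin 2 → ℝ := ![0, l.2]
def bd (l : ℝ × ℝ) : Fin 2 → ℝ := ![1, l.1]

lemma onl2 (p : Fin 2 → ℝ) (l : ℝ × ℝ) : OnL ba bd p l ↔ p 1 = l.2 + p 0 * l.1 := by
  constructor
  · rintro ⟨t, rfl⟩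
    simp [ba, bd]
  · intro h
    refine ⟨p 0, ?_⟩
    ext i
    fin_cases i
    · simp [ba, bd]
    · simpa [ba, bd] using h

lemma lines_in_curve (f : MvPolynomial (Fin 2) ℝ) (hf : f ≠ 0) (L : Finset (ℝ × ℝ))
    (hL : ∀ l ∈ L, ∀ t : ℝ, MvPolynomial.eval (ba l + t • bd l) f = 0) :
    L.card ≤ f.totalDegree := by
  -- a point where `f` does not vanish
  have hpt : ∃ z : Fin 2 → ℝ, MvPolynomial.eval z f ≠ 0 := by
    by_contra h
    push Not at h
    exact hf (MvPolynomial.funext fun z => by rw [h z]; simp)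
  obtain ⟨z, hz⟩ := hpt
  have hne1 : lpoly f ![0, z 1] ![1, 0] ≠ 0 := by
    intro h0
    apply hz
    have := lpoly_eval f ![0, z 1] ![1, 0] (z 0)
    rw [h0] at this
    rw [show z = ![0, z 1] + z 0 • ![1, 0] by ext i; fin_cases i <;> simp, ← this]
    simp
  have hfin1 : {x : ℝ | (lpoly f ![0, z 1] ![1, 0]).IsRoot x}.Finite :=
    Polynomial.finite_setOfPred_isRoot hne1
  have hfin2 : (⋃ q ∈ L.offDiag, {x : ℝ | q.1.2 + x * q.1.1 = q.2.2 + x * q.2.1}).Finite := by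
    refine Set.Finite.biUnion (Finset.finite_toSet _) ?_
    rintro ⟨l, l'⟩ hq
    rw [Finset.mem_coe, Finset.mem_offDiag] at hq
    apply Set.Subsingleton.finite
    intro x hx y hy
    simp only [Set.mem_ofPred_eq] at hx hy
    by_contra hxy
    apply hq.2.2
    have h1 : (x - y) * (l.1 - l'.1) = 0 := by linarith
    have h2 : l.1 = l'.1 := by
      rcases mul_eq_zero.1 h1 with h | h
      · exact (hxy (by linarith)).elim
      · linarith
    have h3 : l.2 = l'.2 := by rw [h2] at hx; linarith
    exact Prod.ext h2 h3
  obtain ⟨x0, hx0⟩ := (hfin1.union hfin2).exists_notMem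
  rw [Set.mem_union, not_or] at hx0
  have hne2 : lpoly f ![x0, 0] ![0, 1] ≠ 0 := by
    intro h0
    apply hx0.1
    have := lpoly_eval f ![x0, 0] ![0, 1] (z 1)
    rw [h0] at this
    rw [Set.mem_ofPred_eq, Polynomial.IsRoot, lpoly_eval,
      show (![0, z 1] + x0 • ![1, 0] : Fin 2 → ℝ) = ![x0, 0] + z 1 • ![0, 1] by
        ext i; fin_cases i <;> simp, ← this]
    simp
  have hinj : Set.InjOn (fun l : ℝ × ℝ => l.2 + x0 * l.1) L := by
    intro l hl l' hl' h
    by_contra hne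
    apply hx0.2
    simp only [Set.mem_iUnion]
    exact ⟨(l, l'), Finset.mem_offDiag.2 ⟨hl, hl', hne⟩, h⟩
  rw [← Finset.card_image_of_injOn hinj]
  calc _ ≤ (lpoly f ![x0, 0] ![0, 1]).roots.toFinset.card := by
        apply Finset.card_le_card
        intro y hy
        obtain ⟨l, hl, rfl⟩ := Finset.mem_image.1 hy
        rw [Multiset.mem_toFinset, Polynomial.mem_roots hne2, Polynomial.IsRoot, lpoly_eval]
        have e : (![x0, 0] + (l.2 + x0 * l.1) • ![0, 1] : Fin 2 → ℝ) = ba l + x0 • bd l := by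
          ext i; fin_cases i <;> simp [ba, bd]
        rw [e]
        exact hL l hl x0
    _ ≤ _ := Multiset.toFinset_card_le _
    _ ≤ (lpoly f ![x0, 0] ![0, 1]).natDegree := Polynomial.card_roots' _
    _ ≤ _ := lpoly_deg _ _ _

lemma pair2 (L : Finset (ℝ × ℝ)) : PairUniq (OnL ba bd) L := by
  intro l _ l' _ p p' hne h1 h2 h3 h4
  rw [onl2] at h1 h2 h3 h4
  have hx : p 0 ≠ p' 0 := by
    intro h
    apply hne
    ext i
    fin_cases i
    · exact h
    · simp only [Fin.mk_one]
      change p 1 = p' 1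
      rw [h1, h2, h]
  have h5 : (p 0 - p' 0) * (l.1 - l'.1) = 0 := by linarith
  have h6 : l.1 = l'.1 := by
    rcases mul_eq_zero.1 h5 with h | h
    · exact (hx (by linarith)).elim
    · linarith
  have h7 : l.2 = l'.2 := by rw [h6] at h1; linarith
  exact Prod.ext h6 h7

/-- Szemerédi–Trotter with an `ε` loss in the plane. -/
theorem planar_ST (ε : ℝ) (hε : 0 < ε) : ∃ β : ℝ, 0 < β ∧
    ∀ (P : Finset (Fin 2 → ℝ)) (L : Finset (ℝ × ℝ)),
      (icount (OnL ba bd) P L : ℝ) ≤ β * ((P.card : ℝ) ^ ((2 / 3 : ℝ) + ε)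
        * (L.card : ℝ) ^ (2 / 3 : ℝ) + P.card + L.card) := by
  obtain ⟨s, hs1, hs⟩ := choose_s 2 (by norm_num) ε hε
  set D : ℝ := (pdeg 2 s : ℝ) with hDdef
  have hD : 0 ≤ D := Nat.cast_nonneg _
  obtain ⟨m₁, hm1, hm2⟩ := choose_m ε D hε hD
  refine ⟨4 * D + m₁ + 2, by positivity, fun P L => ?_⟩
  have := abstract_induction (K := List SignType) (OnL ba bd) (fun _ => True)
    (fun _ _ _ _ => trivial) (fun L _ => pair2 L)
    (2 / 3) ε (2 ^ (2 * s)) D D 0 m₁ (4 * D + m₁ + 2) (by norm_num) (by norm_num) hε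
    (by
      calc (2:ℝ) = 2 ^ 1 := by norm_num
        _ ≤ _ := pow_le_pow_right₀ (by norm_num) (by omega)) hD hD le_rfl hm1 hm2
    (by linarith) (by linarith) (by linarith) (by linarith)
    (by
      have := hs (2 / 3) (by norm_num) (by norm_num)
      rwa [show ((2 / 3 : ℝ) / (2 : ℕ) + ε) = (1 - 2 / 3) + ε by push_cast; ring] at this)
    (Or.inl rfl) ?_ P L trivial
  · rw [show 2 * (1 - 2 / 3 : ℝ) + ε = 2 / 3 + ε by ring, zero_mul, add_zero] at this
    exact this
  · intro P L _
    obtain ⟨f, hf0, hfd, T, Pc, Lc, h1, h2, h3, h4⟩ := step_lemma s ba bd P L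
    refine ⟨T, Pc, Lc, ((P.filter fun p => MvPolynomial.eval p f = 0).card : ℝ),
      (icount (OnL ba bd) (P.filter fun p => MvPolynomial.eval p f = 0)
            (L.filter fun l => ∀ t : ℝ, MvPolynomial.eval (ba l + t • bd l) f = 0) : ℝ),
      Nat.cast_nonneg _, ?_, ?_, ?_, ?_, ?_⟩
    · intro c hc
      exact ⟨(h1 c hc).1, by exact_mod_cast (h1 c hc).2⟩
    · exact_mod_cast h2
    · rw [hDdef]; unfold pdeg; exact_mod_cast h3
    · rw [hDdef]; unfold pdeg; exact_mod_cast h4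
    · have hb : (L.filter fun l => ∀ t : ℝ, MvPolynomial.eval (ba l + t • bd l) f = 0).card
          ≤ pdeg 2 s :=
        (lines_in_curve f hf0 _ fun l hl => (Finset.mem_filter.1 hl).2).trans hfd
      have hc := (icount_le_mul (OnL ba bd) (P.filter fun p => MvPolynomial.eval p f = 0)
        (L.filter fun l => ∀ t : ℝ, MvPolynomial.eval (ba l + t • bd l) f = 0)).trans
          (Nat.mul_le_mul_left _ hb)
      have hc' : (icount (OnL ba bd) (P.filter fun p => MvPolynomial.eval p f = 0)
            (L.filter fun l => ∀ t : ℝ, MvPolynomial.eval (ba l + t • bd l) f = 0) : ℝ)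
          ≤ (P.filter fun p => MvPolynomial.eval p f = 0).card * D := by
        rw [hDdef]; exact_mod_cast hc
      have hn : (0:ℝ) ≤ D * L.card := mul_nonneg hD (Nat.cast_nonneg _)
      linarith

lemma exists_dual_ne (S : Finset (Fin 3 → ℝ)) :
    ∃ u : Module.Dual ℝ (Fin 3 → ℝ), ∀ v ∈ S, v ≠ 0 → u v ≠ 0 := by
  obtain ⟨u, hu⟩ := Module.exists_dual_forall_apply_ne_zero (K := ℝ)
    (fun v : {v // v ∈ S.filter fun v => v ≠ 0} => v.1)
    (fun v => (Finset.mem_filter.1 v.2).2)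
  exact ⟨u, fun v hv h0 => hu ⟨v, Finset.mem_filter.2 ⟨hv, h0⟩⟩⟩

lemma icount_map {X Y Λ M : Type} [DecidableEq Y] [DecidableEq M] (R : X → Λ → Prop) (R' : Y → M → Prop) (π : X → Y) (g : Λ → M)
    (P : Finset X) (L : Finset Λ) (hπ : Set.InjOn π P) (hg : Set.InjOn g L)
    (h : ∀ p ∈ P, ∀ l ∈ L, R p l → R' (π p) (g l)) :
    icount R P L ≤ icount R' (P.image π) (L.image g) := by
  unfold icount
  rw [Finset.sum_image hg]
  refine Finset.sum_le_sum fun l hl => ?_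
  rw [← Finset.card_image_of_injOn (s := P.filter fun p => R p l) (f := π)
    (hπ.mono (by intro x hx; exact (Finset.mem_filter.1 hx).1))]
  apply Finset.card_le_card
  intro y hy
  obtain ⟨p, hp, rfl⟩ := Finset.mem_image.1 hy
  rw [Finset.mem_filter] at hp
  exact Finset.mem_filter.2 ⟨Finset.mem_image_of_mem _ hp.1, h p hp.1 l hl hp.2⟩

/-- Base point and direction of a line in space. -/
lemma exists_ab (l : Set (Fin 3 → ℝ)) : ∃ ab : (Fin 3 → ℝ) × (Fin 3 → ℝ),
    IsLine l → ab.2 ≠ 0 ∧ l = {x | ∃ t : ℝ, x = ab.1 + t • ab.2} := by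
  by_cases h : IsLine l
  · obtain ⟨a, b, hb, hl⟩ := h
    exact ⟨(a, b), fun _ => ⟨hb, hl⟩⟩
  · exact ⟨0, fun h' => (h h').elim⟩

def lineA (l : Set (Fin 3 → ℝ)) : Fin 3 → ℝ := (exists_ab l).choose.1
def lineB (l : Set (Fin 3 → ℝ)) : Fin 3 → ℝ := (exists_ab l).choose.2

lemma lineB_ne {l : Set (Fin 3 → ℝ)} (h : IsLine l) : lineB l ≠ 0 :=
  ((exists_ab l).choose_spec h).1

lemma mem_line {l : Set (Fin 3 → ℝ)} (h : IsLine l) (p : Fin 3 → ℝ) :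
    p ∈ l ↔ OnL lineA lineB p l := by
  have := ((exists_ab l).choose_spec h).2
  constructor
  · intro hp
    rw [this] at hp
    exact hp
  · intro hp
    rw [this]
    exact hp

lemma pair3 (L : Finset (Set (Fin 3 → ℝ))) (hL : ∀ l ∈ L, IsLine l) :
    PairUniq (OnL lineA lineB) L := by
  have key : ∀ l : Set (Fin 3 → ℝ), IsLine l → ∀ p p' : Fin 3 → ℝ, p ≠ p' → p ∈ l → p' ∈ l →
      l = {x | ∃ t : ℝ, x = p + t • (p' - p)} := by
    intro l hl p p' hne hp hp'
    rw [mem_line hl] at hp hp'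
    obtain ⟨t, ht⟩ := hp
    obtain ⟨t', ht'⟩ := hp'
    have htt : t' - t ≠ 0 := by
      intro h
      apply hne
      rw [ht, ht', sub_eq_zero.1 h]
    ext x
    rw [mem_line hl]
    constructor
    · rintro ⟨r, rfl⟩
      refine ⟨(r - t) / (t' - t), ?_⟩
      rw [ht, ht']
      ext i
      simp only [Pi.add_apply, Pi.sub_apply, Pi.smul_apply, smul_eq_mul]
      field_simp
      ring
    · rintro ⟨r, rfl⟩
      refine ⟨t + r * (t' - t), ?_⟩
      rw [ht, ht']
      ext i
      simp only [Pi.add_apply, Pi.sub_apply, Pi.smul_apply, smul_eq_mul]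
      ring
  intro l hl l' hl' p p' hne h1 h2 h3 h4
  rw [key l (hL l hl) p p' hne ((mem_line (hL l hl) p).2 h1) ((mem_line (hL l hl) p').2 h2),
    key l' (hL l' hl') p p' hne ((mem_line (hL l' hl') p).2 h3) ((mem_line (hL l' hl') p').2 h4)]

theorem spatial_ST (ε : ℝ) (hε : 0 < ε) : ∃ β : ℝ, 0 < β ∧
    ∀ (P : Finset (Fin 3 → ℝ)) (L : Finset (Set (Fin 3 → ℝ))), (∀ l ∈ L, IsLine l) →
      (icount (OnL lineA lineB) P L : ℝ) ≤ β * ((P.card : ℝ) ^ ((2 / 3 : ℝ) + ε)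
        * (L.card : ℝ) ^ (2 / 3 : ℝ) + P.card + L.card) := by
  obtain ⟨β, hβ, H⟩ := planar_ST ε hε
  refine ⟨β, hβ, fun P L hL => ?_⟩
  obtain ⟨u, hu⟩ := exists_dual_ne (L.image lineB ∪ (P ×ˢ P).image fun q => q.1 - q.2)
  have hub : ∀ l ∈ L, u (lineB l) ≠ 0 := fun l hl =>
    hu _ (Finset.mem_union_left _ (Finset.mem_image_of_mem _ hl)) (lineB_ne (hL l hl))
  have hup : ∀ p ∈ P, ∀ p' ∈ P, u p = u p' → p = p' := by
    intro p hp p' hp' h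
    by_contra hne
    refine hu (p - p') (Finset.mem_union_right _ (Finset.mem_image.2
      ⟨(p, p'), Finset.mem_product.2 ⟨hp, hp'⟩, rfl⟩)) (sub_ne_zero.2 hne) ?_
    rw [map_sub, h, sub_self]
  set b' : Set (Fin 3 → ℝ) → Fin 3 → ℝ := fun l => (u (lineB l))⁻¹ • lineB l with hb'
  set a' : Set (Fin 3 → ℝ) → Fin 3 → ℝ := fun l => lineA l - u (lineA l) • b' l with ha'
  have hon : ∀ l ∈ L, ∀ p, OnL lineA lineB p l ↔ p = a' l + u p • b' l := by
    intro l hl p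
    have h0 := hub l hl
    constructor
    · rintro ⟨t, rfl⟩
      rw [map_add, map_smul]
      ext i
      simp only [ha', hb', Pi.add_apply, Pi.sub_apply, Pi.smul_apply, smul_eq_mul]
      field_simp
      ring
    · intro h
      refine ⟨(u p - u (lineA l)) * (u (lineB l))⁻¹, ?_⟩
      refine h.trans ?_
      ext i
      simp only [ha', hb', Pi.add_apply, Pi.sub_apply, Pi.smul_apply, smul_eq_mul]
      ring
  obtain ⟨w, hw⟩ := exists_dual_ne (((L ×ˢ L).image fun q => a' q.1 - a' q.2)
    ∪ (L ×ˢ L).image fun q => b' q.1 - b' q.2)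
  have hwa : ∀ l ∈ L, ∀ l' ∈ L, w (a' l) = w (a' l') → a' l = a' l' := by
    intro p hp p' hp' h
    by_contra hne
    refine hw (a' p - a' p') (Finset.mem_union_left _ (Finset.mem_image.2
      ⟨(p, p'), Finset.mem_product.2 ⟨hp, hp'⟩, rfl⟩)) (sub_ne_zero.2 hne) ?_
    rw [map_sub, h, sub_self]
  have hwb : ∀ l ∈ L, ∀ l' ∈ L, w (b' l) = w (b' l') → b' l = b' l' := by
    intro p hp p' hp' h
    by_contra hne
    refine hw (b' p - b' p') (Finset.mem_union_right _ (Finset.mem_image.2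
      ⟨(p, p'), Finset.mem_product.2 ⟨hp, hp'⟩, rfl⟩)) (sub_ne_zero.2 hne) ?_
    rw [map_sub, h, sub_self]
  set π : (Fin 3 → ℝ) → Fin 2 → ℝ := fun p => ![u p, w p] with hπ
  set g : Set (Fin 3 → ℝ) → ℝ × ℝ := fun l => (w (b' l), w (a' l)) with hg
  have hπi : Set.InjOn π P := by
    intro p hp p' hp' h
    exact hup p hp p' hp' (by simpa [hπ] using congrFun h 0)
  have hgi : Set.InjOn g L := by
    intro l hl l' hl' h
    have h1 := hwb l hl l' hl' (congrArg Prod.fst h)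
    have h2 := hwa l hl l' hl' (congrArg Prod.snd h)
    ext p
    rw [mem_line (hL l hl), mem_line (hL l' hl'), hon l hl, hon l' hl', h1, h2]
  have hle := icount_map (OnL lineA lineB) (OnL ba bd) π g P L hπi hgi (by
    intro p hp l hl h
    rw [onl2]
    have := congrArg w ((hon l hl p).1 h)
    rw [map_add, map_smul, smul_eq_mul] at this
    simpa [hπ, hg] using this)
  have h2 := H (P.image π) (L.image g)
  rw [Finset.card_image_of_injOn hπi, Finset.card_image_of_injOn hgi] at h2
  exact le_trans (by exact_mod_cast hle) h2

lemma incidences_eq (P : Finset (Fin 3 → ℝ)) (L : Finset (Set (Fin 3 → ℝ)))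
    (hL : ∀ l ∈ L, IsLine l) : Incidences P L = icount (OnL lineA lineB) P L := by
  unfold Incidences icount
  rw [Finset.card_filter, Finset.sum_product_right]
  refine Finset.sum_congr rfl fun l hl => ?_
  rw [Finset.card_filter]
  refine Finset.sum_congr rfl fun p _ => ?_
  simp only [mem_line (hL l hl) p]

/-- **Lines in `ℝ³` (the case `k = 2` of the main three-dimensional theorem).**
For each `ε > 0` there is a constant `c(ε)` such that the following holds, with a
constant `α` depending only on `ε`. If `P` is a set of `m` distinct points and `L`
a set of `n` distinct lines in `ℝ³` such that every algebraic surface of degree at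
most `c(ε)` contains at most `q₂` lines of `L`, then
`I(P,L) ≤ α (m^{1/2+ε} n^{3/4} + m^{2/3+ε} n^{1/2} q₂^{1/6} + m + n)`. -/
theorem lines_in_R3 (ε : ℝ) (hε : 0 < ε) :
    ∃ c : ℕ, ∃ α : ℝ, 0 < α ∧
      ∀ (P : Finset (Fin 3 → ℝ)) (L : Finset (Set (Fin 3 → ℝ))) (q₂ : ℕ),
        (∀ ℓ ∈ L, IsLine ℓ) →
        (∀ f : MvPolynomial (Fin 3) ℝ, f ≠ 0 → f.totalDegree ≤ c →
            (L.filter fun ℓ => ℓ ⊆ zeroSet f).card ≤ q₂) →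
        (Incidences P L : ℝ) ≤
          α * ((P.card : ℝ) ^ ((1 : ℝ) / 2 + ε) * (L.card : ℝ) ^ ((3 : ℝ) / 4)
                + (P.card : ℝ) ^ ((2 : ℝ) / 3 + ε) * (L.card : ℝ) ^ ((1 : ℝ) / 2)
                    * (q₂ : ℝ) ^ ((1 : ℝ) / 6)
                + (P.card : ℝ) + (L.card : ℝ)) := by
  obtain ⟨s, hs1, hs⟩ := choose_s 3 (by norm_num) ε hε
  obtain ⟨β, hβ, hST⟩ := spatial_ST ε hε
  set D : ℝ := (pdeg 3 s : ℝ) with hDdef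
  have hD : 0 ≤ D := Nat.cast_nonneg _
  obtain ⟨m₁, hm1, hm2⟩ := choose_m ε D hε hD
  refine ⟨pdeg 3 s, 4 * β + D + m₁ + 2, by positivity, fun P L q₂ hL hq => ?_⟩
  have := abstract_induction (K := List SignType) (OnL lineA lineB)
    (fun L => (∀ l ∈ L, IsLine l) ∧ ∀ f : MvPolynomial (Fin 3) ℝ, f ≠ 0 →
      f.totalDegree ≤ pdeg 3 s → (L.filter fun ℓ => ℓ ⊆ zeroSet f).card ≤ q₂)
    (fun L L' hs h => ⟨fun l hl => h.1 l (hs hl), fun f h0 hf =>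
      (Finset.card_le_card (Finset.filter_subset_filter _ hs)).trans (h.2 f h0 hf)⟩)
    (fun L h => pair3 L h.1)
    (3 / 4) ε (2 ^ (3 * s)) D β ((q₂ : ℝ) ^ ((1 : ℝ) / 6)) m₁ (4 * β + D + m₁ + 2)
    (by norm_num) (by norm_num) hε
    (by
      calc (2:ℝ) = 2 ^ 1 := by norm_num
        _ ≤ _ := pow_le_pow_right₀ (by norm_num) (by omega)) hD hβ.le (by positivity) hm1 hm2
    (by linarith) (by linarith) (by linarith) (by linarith)
    (by
      have := hs (3 / 4) (by norm_num) (by norm_num)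
      rwa [show ((3 / 4 : ℝ) / (3 : ℕ) + ε) = (1 - 3 / 4) + ε by push_cast; ring] at this)
    (Or.inr (by
      have := hs (1 / 2) (by norm_num) (by norm_num)
      rwa [show ((1 / 2 : ℝ) / (3 : ℕ) + ε) = 1 / 6 + ε by push_cast; ring] at this))
    ?_ P L ⟨hL, hq⟩
  · rw [show 2 * (1 - 3 / 4 : ℝ) + ε = 1 / 2 + ε by ring] at this
    rw [incidences_eq P L hL]
    refine this.trans (le_of_eq ?_)
    ring
  · intro P L hF
    obtain ⟨f, hf0, hfd, T, Pc, Lc, h1, h2, h3, h4⟩ := step_lemma s lineA lineB P L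
    set P0 := P.filter fun p => MvPolynomial.eval p f = 0 with hP0
    set L0 := L.filter fun l => ∀ t : ℝ, MvPolynomial.eval (lineA l + t • lineB l) f = 0 with hL0
    refine ⟨T, Pc, Lc, (P0.card : ℝ), (icount (OnL lineA lineB) P0 L0 : ℝ),
      Nat.cast_nonneg _, ?_, ?_, ?_, ?_, ?_⟩
    · intro c hc
      exact ⟨(h1 c hc).1, by exact_mod_cast (h1 c hc).2⟩
    · exact_mod_cast h2
    · rw [hDdef]; unfold pdeg; exact_mod_cast h3
    · rw [hDdef]; unfold pdeg; exact_mod_cast h4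
    · have hsub : L0 ⊆ L := Finset.filter_subset _ _
      have hLq : L0.card ≤ q₂ := by
        refine le_trans (Finset.card_le_card ?_) (hF.2 f hf0 hfd)
        intro l hl
        rw [hL0, Finset.mem_filter] at hl
        refine Finset.mem_filter.2 ⟨hl.1, fun p hp => ?_⟩
        obtain ⟨t, rfl⟩ := (mem_line (hF.1 l hl.1) p).1 hp
        exact hl.2 t
      have hLn : (L0.card : ℝ) ≤ L.card := by exact_mod_cast Finset.card_le_card hsub
      have hLq' : (L0.card : ℝ) ≤ q₂ := by exact_mod_cast hLq
      have hPm : (P0.card : ℝ) ≤ P.card := by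
        exact_mod_cast Finset.card_le_card (Finset.filter_subset _ _)
      refine (hST P0 L0 fun l hl => hF.1 l (hsub hl)).trans ?_
      apply mul_le_mul_of_nonneg_left _ hβ.le
      have e1 : (L0.card : ℝ) ^ (2 / 3 : ℝ)
          = (L0.card : ℝ) ^ (1 / 2 : ℝ) * (L0.card : ℝ) ^ (1 / 6 : ℝ) := by
        rw [← Real.rpow_add_of_nonneg (Nat.cast_nonneg _) (by norm_num) (by norm_num)]
        norm_num
      have e2 : (L0.card : ℝ) ^ (2 / 3 : ℝ)
          ≤ (L.card : ℝ) ^ (1 / 2 : ℝ) * (q₂ : ℝ) ^ (1 / 6 : ℝ) := by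
        rw [e1]
        exact mul_le_mul (Real.rpow_le_rpow (Nat.cast_nonneg _) hLn (by norm_num))
          (Real.rpow_le_rpow (Nat.cast_nonneg _) hLq' (by norm_num)) (by positivity) (by positivity)
      have e3 : (P0.card : ℝ) ^ ((2 / 3 : ℝ) + ε) * (L0.card : ℝ) ^ (2 / 3 : ℝ)
          ≤ (P.card : ℝ) ^ ((2 / 3 : ℝ) + ε)
            * ((L.card : ℝ) ^ (1 / 2 : ℝ) * (q₂ : ℝ) ^ (1 / 6 : ℝ)) :=
        mul_le_mul (Real.rpow_le_rpow (Nat.cast_nonneg _) hPm (by positivity)) e2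
          (by positivity) (by positivity)
      have e4 : (P.card : ℝ) ^ ((2 / 3 : ℝ) + ε)
            * ((L.card : ℝ) ^ (1 / 2 : ℝ) * (q₂ : ℝ) ^ (1 / 6 : ℝ))
          = (q₂ : ℝ) ^ (1 / 6 : ℝ) * ((P.card : ℝ) ^ ((2 / 3 : ℝ) + ε)
            * (L.card : ℝ) ^ (1 / 2 : ℝ)) := by ring
      linarith
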